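/- arXiv:2308.01055 — 3 statements merged into one kernel-verified Lean document; each statement's English description precedes it below -/
import Mathlib

section
/- Suppose k(x, ·) is three times continuously differentiable in y with finite bounds C_k, C'_k, C''_k, C'''_k, that G'(m†) has full column rank, and that for some θ ∈ (0,1] the pre-certificate η† := K* Σ₀^{-1} G'(m†) I₀^{-1}(ρ; 0) is θ-admissible for µ† with weights w_n = √|q_n†|. Then there exist constants C₁, C₂ > 0 and r̂ > 0 such that whenever ε ∈ ℝ^{N_o} and β > 0 satisfy C₁(‖ε‖_{Σ₀^{-1}} + β) ≤ √(θ/32) and C₂ β^{-1}((‖ε‖_{Σ₀^{-1}} + β)² + ‖ε‖_{Σ₀^{-1}}) ≤ θ²/32: the Tikhonov problem of minimizing (1/2)‖Kµ − z^d(ε)‖_{Σ₀^{-1}}² + β‖µ‖_M over µ ∈ M(Ω_s) has a unique minimizer, and that minimizer equals µ̂ = Σ_{n=1}^{N_s} q̂_n δ_{ŷ_n}, where m̂ = (q̂; ŷ) is the unique solution of G'(m)ᵀ Σ₀^{-1}(G(m) − G(m†) − ε) + β(ρ; 0) = 0 in the ball {m : ‖m − m†‖_{W†} ≤ (3/2)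 r̂}. -/
/-!
The argument has a finite-dimensional half and a duality half.

Since `G'(m†)` has full column rank, `I₀ = G'(m†)ᵀ Σ₀⁻¹ G'(m†)` is invertible, so the implicit
function theorem applies to the stationarity equation at `(ε, β, m) = (0, 0, m†)`: the solutions
near `m†` form the graph of a differentiable branch `φ(ε, β)` (`exists_solution_branch`). This gives
existence and uniqueness of `m̂ = φ(ε, β)` in a fixed `W†`-ball. Differentiating the equation along
the branch shows that the rescaled residual
`ẑ = -β⁻¹ Σ₀⁻¹ (G(m̂) - G(m†) - ε)` tends to `z† = Σ₀⁻¹ G'(m†) I₀⁻¹ (ρ; 0)`, the dual variable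
of the pre-certificate, whenever `‖ε‖ + β → 0` and `‖ε‖ / β → 0`. These two limits define the filter
`smallNoise`; the constants `C₁`, `C₂` are chosen so that the two smallness conditions put `(ε, β)`
in a prescribed set of that filter.

The stationarity equation says that `η̂ = K* ẑ` takes the values `sign(q_n†)` and has vanishing
gradient at the points `ŷ_n`. Admissibility of `η†` is stable under such perturbations
(`certificate_stable`): the quadratic decay of `η†` at `y_n†` makes the Hessian of
`sign(q_n†) η†` negative definite there (`hessian_neg_of_decay`), which is an open condition, so
`|η̂| < 1` near `y_n†` except at `ŷ_n`; away from the points `y_n†` the strict bound `|η†| < 1` on a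
compact set persists.

Finally `η̂` certifies optimality (`unique_min_of_certificate`): expanding the quadratic data term
around `µ̂` and using `∫ η̂ dν ≤ ‖ν‖`, with equality for `µ̂`, shows that `µ̂` is a minimizer.
Any other minimizer has the same observations and attains equality in the duality bound, hence is
supported
in `{|η̂| = 1} = {ŷ_n}`; the vectors `(k(x_j, ŷ_n))_j` are linearly independent, being close to
columns of `G'(m†)`, so its coefficients are `q̂`.
-/

open MeasureTheory

noncomputable section

/-- Integral of a function against a signed measure, via the Jordan decomposition. -/
def sInt {α : Type*} [MeasurableSpace α] (μ : SignedMeasure α) (f : α → ℝ) : ℝ :=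
  (∫ a, f a ∂μ.toJordanDecomposition.posPart) - ∫ a, f a ∂μ.toJordanDecomposition.negPart

/-- Total variation norm of a signed measure. -/
def mnorm {α : Type*} [MeasurableSpace α] (μ : SignedMeasure α) : ℝ :=
  (μ.totalVariation Set.univ).toReal

/-- The sparse measure `Σ_n q_n δ_{y_n}`. -/
def sparseSub {α : Type*} [MeasurableSpace α] {N : ℕ} (q : Fin N → ℝ) (y : Fin N → α) :
    SignedMeasure α :=
  ∑ n, q n • (Measure.dirac (y n)).toSignedMeasure

/-- The source-to-measurement operator `(Kμ)_j = ∫ k(x_j, y) dμ(y)`. -/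
def Kop {d dO No : ℕ} (Ωs : Set (EuclideanSpace ℝ (Fin d)))
    (k : EuclideanSpace ℝ (Fin dO) → EuclideanSpace ℝ (Fin d) → ℝ)
    (x : Fin No → EuclideanSpace ℝ (Fin dO)) (μ : SignedMeasure Ωs) : Fin No → ℝ :=
  fun j => sInt μ fun y => k (x j) ↑y

/-- The Tikhonov functional `J(μ) = ½‖Kμ − z‖²_{Σ₀⁻¹} + β‖μ‖_M`. -/
def Jfun {d dO No : ℕ} (Ωs : Set (EuclideanSpace ℝ (Fin d)))
    (k : EuclideanSpace ℝ (Fin dO) → EuclideanSpace ℝ (Fin d) → ℝ)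
    (x : Fin No → EuclideanSpace ℝ (Fin dO)) (σ0 : Fin No → ℝ)
    (z : Fin No → ℝ) (β : ℝ) (μ : SignedMeasure Ωs) : ℝ :=
  (1 / 2) * ∑ j, (Kop Ωs k x μ j - z j) ^ 2 / σ0 j + β * mnorm μ


open Matrix

/-- The parameter-to-observation map `G(q; y)_j = Σ_n q_n k(x_j, y_n)`. -/
def Gfun {d dO No Ns : ℕ}
    (k : EuclideanSpace ℝ (Fin dO) → EuclideanSpace ℝ (Fin d) → ℝ)
    (x : Fin No → EuclideanSpace ℝ (Fin dO))
    (m : (Fin Ns → ℝ) × (Fin Ns → EuclideanSpace ℝ (Fin d))) : Fin No → ℝ :=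
  fun j => ∑ n, m.1 n * k (x j) (m.2 n)

/-- The Jacobian matrix `G'(m)` of `G` with respect to `m = (q; y)`. -/
def Jmat {d dO No Ns : ℕ}
    (k : EuclideanSpace ℝ (Fin dO) → EuclideanSpace ℝ (Fin d) → ℝ)
    (x : Fin No → EuclideanSpace ℝ (Fin dO))
    (q : Fin Ns → ℝ) (y : Fin Ns → EuclideanSpace ℝ (Fin d)) :
    Matrix (Fin No) (Fin Ns ⊕ Fin Ns × Fin d) ℝ :=
  Matrix.of fun j => Sum.elim (fun n => k (x j) (y n))
    (fun p => q p.1 * fderiv ℝ (k (x j)) (y p.1) (EuclideanSpace.single p.2 1))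

/-- The Fisher information matrix `I₀ = G'(m†)ᵀ Σ₀⁻¹ G'(m†)`. -/
def Fisher {d dO No Ns : ℕ}
    (k : EuclideanSpace ℝ (Fin dO) → EuclideanSpace ℝ (Fin d) → ℝ)
    (x : Fin No → EuclideanSpace ℝ (Fin dO)) (σ0 : Fin No → ℝ)
    (q : Fin Ns → ℝ) (y : Fin Ns → EuclideanSpace ℝ (Fin d)) :
    Matrix (Fin Ns ⊕ Fin Ns × Fin d) (Fin Ns ⊕ Fin Ns × Fin d) ℝ :=
  (Jmat k x q y)ᵀ * Matrix.diagonal (fun j => (σ0 j)⁻¹) * Jmat k x q y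

/-- The sign vector `(ρ; 0)`. -/
def rho0 (d : ℕ) {Ns : ℕ} (q : Fin Ns → ℝ) : (Fin Ns ⊕ Fin Ns × Fin d) → ℝ :=
  Sum.elim (fun n => Real.sign (q n)) 0

/-- The residual of the stationarity equation
`S(m) = G'(m)ᵀ Σ₀⁻¹(G(m) − G(m†) − ε) + β(ρ; 0)`. -/
def Smap {d dO No Ns : ℕ}
    (k : EuclideanSpace ℝ (Fin dO) → EuclideanSpace ℝ (Fin d) → ℝ)
    (x : Fin No → EuclideanSpace ℝ (Fin dO)) (σ0 : Fin No → ℝ)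
    (mdag : (Fin Ns → ℝ) × (Fin Ns → EuclideanSpace ℝ (Fin d)))
    (ε : Fin No → ℝ) (β : ℝ)
    (m : (Fin Ns → ℝ) × (Fin Ns → EuclideanSpace ℝ (Fin d))) :
    (Fin Ns ⊕ Fin Ns × Fin d) → ℝ :=
  (Jmat k x m.1 m.2)ᵀ *ᵥ (fun j => (Gfun k x m j - Gfun k x mdag j - ε j) / σ0 j) +
    β • rho0 d mdag.1

/-- Squared weighted `W†`-norm of a perturbation, with weights built from `qd`. -/
def WnormSq {d Ns : ℕ} (qd : Fin Ns → ℝ)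
    (δ : (Fin Ns → ℝ) × (Fin Ns → EuclideanSpace ℝ (Fin d))) : ℝ :=
  (∑ n, (δ.1 n) ^ 2 / (4 * |qd n|)) + ∑ n, |qd n| * ‖δ.2 n‖ ^ 2

/-- Weighted `W†`-norm. -/
def Wnorm {d Ns : ℕ} (qd : Fin Ns → ℝ)
    (δ : (Fin Ns → ℝ) × (Fin Ns → EuclideanSpace ℝ (Fin d))) : ℝ :=
  Real.sqrt (WnormSq qd δ)

/-- The `Σ₀⁻¹`-weighted Euclidean norm on the observation space. -/
def enorm {No : ℕ} (σ0 ε : Fin No → ℝ) : ℝ :=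
  Real.sqrt (∑ j, ε j ^ 2 / σ0 j)

/-- `η` is `θ`-admissible for the sparse measure with coefficients `qc` and positions `yc`,
with squared weights `wsq`. -/
def Admissible {d Ns : ℕ} (Ωs : Set (EuclideanSpace ℝ (Fin d))) (wsq : Fin Ns → ℝ)
    (θ : ℝ) (qc : Fin Ns → ℝ) (yc : Fin Ns → EuclideanSpace ℝ (Fin d))
    (η : EuclideanSpace ℝ (Fin d) → ℝ) : Prop :=
  (∀ n, η (yc n) = Real.sign (qc n)) ∧
    ∀ z ∈ Ωs, |η z| ≤ 1 - θ * min θ (⨅ n, wsq n * ‖z - yc n‖ ^ 2)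

/-! ### Signed measures: duality bound and sparse measures -/

section Measures

variable {α : Type*} [MeasurableSpace α]

lemma mnorm_eq (μ : SignedMeasure α) : mnorm μ =
    μ.toJordanDecomposition.posPart.real Set.univ +
      μ.toJordanDecomposition.negPart.real Set.univ := by
  rw [mnorm, SignedMeasure.totalVariation, Measure.add_apply,
    ENNReal.toReal_add (measure_ne_top _ _) (measure_ne_top _ _)]
  rfl

/-- The gap in the duality bound `∫ f dμ ≤ ‖μ‖`, as a sum of two terms that are nonnegative for
`|f| ≤ 1`. -/
lemma mnorm_sub_sInt (μ : SignedMeasure α) (f : α → ℝ)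
    (hp : Integrable f μ.toJordanDecomposition.posPart)
    (hn : Integrable f μ.toJordanDecomposition.negPart) :
    mnorm μ - sInt μ f = ∫ a, (1 - f a) ∂μ.toJordanDecomposition.posPart +
      ∫ a, (1 + f a) ∂μ.toJordanDecomposition.negPart := by
  rw [integral_sub (integrable_const _) hp, integral_add (integrable_const _) hn, mnorm_eq, sInt]
  simp
  ring

lemma sInt_le_mnorm (μ : SignedMeasure α) (f : α → ℝ)
    (hp : Integrable f μ.toJordanDecomposition.posPart)
    (hn : Integrable f μ.toJordanDecomposition.negPart) (hf : ∀ a, |f a| ≤ 1) :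
    sInt μ f ≤ mnorm μ := by
  have h := mnorm_sub_sInt μ f hp hn
  have h1 : 0 ≤ ∫ a, (1 - f a) ∂μ.toJordanDecomposition.posPart :=
    integral_nonneg fun a => by have := (abs_le.1 (hf a)).2; simp; linarith
  have h2 : 0 ≤ ∫ a, (1 + f a) ∂μ.toJordanDecomposition.negPart :=
    integral_nonneg fun a => by have := (abs_le.1 (hf a)).1; simp; linarith
  linarith

variable {N : ℕ}

lemma sparseSub_apply (q : Fin N → ℝ) (y : Fin N → α) {A : Set α} (hA : MeasurableSet A) :
    sparseSub q y A = ∑ n, q n * (Measure.dirac (y n)).real A := by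
  have hsum : ∀ s : Finset (Fin N),
      (∑ n ∈ s, q n • (Measure.dirac (y n)).toSignedMeasure) A =
        ∑ n ∈ s, q n * (Measure.dirac (y n)).real A := by
    intro s
    induction s using Finset.induction_on with
    | empty => simp
    | insert n s hn ih =>
      rw [Finset.sum_insert hn, Finset.sum_insert hn, _root_.add_apply, ih,
        _root_.smul_apply, Measure.toSignedMeasure_apply_measurable hA, smul_eq_mul]
  exact hsum Finset.univ

variable [MeasurableSingletonClass α]

/-- The Jordan decomposition of `Σ_n q_n δ_{y_n}` for pairwise distinct points `y_n`. -/
def sparseJordan (q : Fin N → ℝ) (y : Fin N → α) (hy : Function.Injective y) :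
    JordanDecomposition α where
  posPart := ∑ n, ENNReal.ofReal (q n) • Measure.dirac (y n)
  negPart := ∑ n, ENNReal.ofReal (-(q n)) • Measure.dirac (y n)
  posPart_finite := ⟨by simp [Measure.finsetSum_apply]⟩
  negPart_finite := ⟨by simp [Measure.finsetSum_apply]⟩
  mutuallySingular := by
    have hfin : (y '' {n | q n ≤ 0}).Finite := (Set.toFinite _).image _
    refine ⟨y '' {n | q n ≤ 0}, hfin.measurableSet, ?_, ?_⟩
    · rw [Measure.finsetSum_apply]
      refine Finset.sum_eq_zero fun n _ => ?_
      by_cases h : q n ≤ 0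
      · simp [ENNReal.ofReal_eq_zero.2 h]
      · have : y n ∉ y '' {n | q n ≤ 0} := by
          rintro ⟨i, hi, hin⟩
          exact h (hy hin ▸ hi)
        simp [Measure.dirac_apply' _ hfin.measurableSet, this]
    · rw [Measure.finsetSum_apply]
      refine Finset.sum_eq_zero fun n _ => ?_
      by_cases h : q n ≤ 0
      · have : y n ∈ y '' {n | q n ≤ 0} := ⟨n, h, rfl⟩
        simp [Measure.dirac_apply' _ hfin.measurableSet.compl, this]
      · have : -(q n) ≤ 0 := by linarith
        simp [ENNReal.ofReal_eq_zero.2 this]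

lemma sparseJordan_toSignedMeasure (q : Fin N → ℝ) (y : Fin N → α) (hy : Function.Injective y) :
    (sparseJordan q y hy).toSignedMeasure = sparseSub q y := by
  ext A hA
  rw [JordanDecomposition.toSignedMeasure, Measure.toSignedMeasure_sub_apply hA]
  simp only [sparseJordan, measureReal_def, Measure.finsetSum_apply,
    Measure.smul_apply, smul_eq_mul]
  rw [ENNReal.toReal_sum, ENNReal.toReal_sum, ← Finset.sum_sub_distrib]
  · rw [sparseSub_apply q y hA]
    refine Finset.sum_congr rfl fun n _ => ?_
    rw [ENNReal.toReal_mul, ENNReal.toReal_mul, ← sub_mul, measureReal_def,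
      ENNReal.toReal_ofReal', ENNReal.toReal_ofReal', max_zero_sub_max_neg_zero_eq_self]
  · intro n _
    exact ENNReal.mul_ne_top ENNReal.ofReal_ne_top (measure_ne_top _ _)
  · intro n _
    exact ENNReal.mul_ne_top ENNReal.ofReal_ne_top (measure_ne_top _ _)

lemma toJordan_sparseSub (q : Fin N → ℝ) (y : Fin N → α) (hy : Function.Injective y) :
    (sparseSub q y).toJordanDecomposition = sparseJordan q y hy := by
  rw [← sparseJordan_toSignedMeasure q y hy,
    JordanDecomposition.toJordanDecomposition_toSignedMeasure]

lemma sInt_sparseSub (q : Fin N → ℝ) (y : Fin N → α) (hy : Function.Injective y) (f : α → ℝ) :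
    sInt (sparseSub q y) f = ∑ n, q n * f (y n) := by
  have hint : ∀ (c : ℝ) (n : Fin N),
      Integrable f (ENNReal.ofReal c • Measure.dirac (y n)) := fun c n =>
    (integrable_dirac (by simp)).smul_measure ENNReal.ofReal_ne_top
  rw [sInt, toJordan_sparseSub q y hy]
  simp only [sparseJordan]
  rw [integral_finsetSum_measure fun n _ => hint _ n,
    integral_finsetSum_measure fun n _ => hint _ n, ← Finset.sum_sub_distrib]
  refine Finset.sum_congr rfl fun n _ => ?_
  rw [integral_smul_measure, integral_smul_measure, integral_dirac, smul_eq_mul, smul_eq_mul,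
    ← sub_mul, ENNReal.toReal_ofReal', ENNReal.toReal_ofReal', max_zero_sub_max_neg_zero_eq_self]

lemma mnorm_sparseSub (q : Fin N → ℝ) (y : Fin N → α) (hy : Function.Injective y) :
    mnorm (sparseSub q y) = ∑ n, |q n| := by
  rw [mnorm_eq, toJordan_sparseSub q y hy]
  simp only [sparseJordan, measureReal_def, Measure.finsetSum_apply,
    Measure.smul_apply, smul_eq_mul, measure_univ, mul_one]
  rw [ENNReal.toReal_sum fun _ _ => ENNReal.ofReal_ne_top,
    ENNReal.toReal_sum fun _ _ => ENNReal.ofReal_ne_top, ← Finset.sum_add_distrib]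
  refine Finset.sum_congr rfl fun n _ => ?_
  rw [ENNReal.toReal_ofReal', ENNReal.toReal_ofReal', max_zero_add_max_neg_zero_eq_abs_self]

/-- If a function bounded by one in modulus attains the duality bound on `μ`, then `μ` lives on the
set where the modulus equals one; here that set is finite, so `μ` is sparse. -/
lemma eq_sparseSub_of_sInt_eq (μ : SignedMeasure α) (f : α → ℝ)
    (hp : Integrable f μ.toJordanDecomposition.posPart)
    (hn : Integrable f μ.toJordanDecomposition.negPart) (hf : ∀ a, |f a| ≤ 1)
    (y : Fin N → α) (hy : Function.Injective y) (hlt : ∀ a, (∀ n, a ≠ y n) → |f a| < 1)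
    (heq : sInt μ f = mnorm μ) : ∃ c : Fin N → ℝ, μ = sparseSub c y := by
  have h := mnorm_sub_sInt μ f hp hn
  have g1 : ∀ a, 0 ≤ 1 - f a := fun a => by have := (abs_le.1 (hf a)).2; linarith
  have g2 : ∀ a, 0 ≤ 1 + f a := fun a => by have := (abs_le.1 (hf a)).1; linarith
  have h1 : 0 ≤ ∫ a, (1 - f a) ∂μ.toJordanDecomposition.posPart := integral_nonneg g1
  have h2 : 0 ≤ ∫ a, (1 + f a) ∂μ.toJordanDecomposition.negPart := integral_nonneg g2
  have e1 : ∫ a, (1 - f a) ∂μ.toJordanDecomposition.posPart = 0 := by linarith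
  have e2 : ∫ a, (1 + f a) ∂μ.toJordanDecomposition.negPart = 0 := by linarith
  rw [integral_eq_zero_iff_of_nonneg g1 ((integrable_const _).sub hp)] at e1
  rw [integral_eq_zero_iff_of_nonneg g2 ((integrable_const _).add hn)] at e2
  have z1 : μ.toJordanDecomposition.posPart (Set.range y)ᶜ = 0 := by
    refine measure_mono_null (fun a ha => ?_) (ae_iff.1 e1)
    have := abs_lt.1 (hlt a fun n hn => ha ⟨n, hn.symm⟩)
    simp only [Pi.zero_apply, Set.mem_ofPred_eq]
    intro h0; linarith
  have z2 : μ.toJordanDecomposition.negPart (Set.range y)ᶜ = 0 := by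
    refine measure_mono_null (fun a ha => ?_) (ae_iff.1 e2)
    have := abs_lt.1 (hlt a fun n hn => ha ⟨n, hn.symm⟩)
    simp only [Pi.zero_apply, Set.mem_ofPred_eq]
    intro h0; linarith
  -- a finite measure carried by the range of `y` is a combination of the Dirac masses there
  have key : ∀ ν : Measure α, IsFiniteMeasure ν → ν (Set.range y)ᶜ = 0 → ∀ A, MeasurableSet A →
      ν.real A = ∑ n, ν.real {y n} * (Measure.dirac (y n)).real A := by
    intro ν _ hν A hA
    have hAe : ν.real A = ν.real (⋃ n ∈ (Finset.univ : Finset (Fin N)), (A ∩ {y n})) := by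
      refine measureReal_congr ?_
      have : ∀ᵐ a ∂ν, a ∈ Set.range y := by
        rw [ae_iff]; exact hν
      filter_upwards [this] with a ha
      obtain ⟨n, rfl⟩ := ha
      apply propext
      constructor
      · intro h
        change y n ∈ ⋃ n ∈ (Finset.univ : Finset (Fin N)), (A ∩ {y n})
        simp only [Set.mem_iUnion]
        exact ⟨n, Finset.mem_univ _, h, rfl⟩
      · intro h
        change y n ∈ ⋃ n ∈ (Finset.univ : Finset (Fin N)), (A ∩ {y n}) at h
        simp only [Set.mem_iUnion] at h
        obtain ⟨_, _, h, _⟩ := h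
        exact h
    rw [hAe, measureReal_biUnion_finset]
    · refine Finset.sum_congr rfl fun n _ => ?_
      by_cases hnA : y n ∈ A
      · simp [measureReal_def, Measure.dirac_apply' _ hA, hnA]
      · simp [measureReal_def, Measure.dirac_apply' _ hA, hnA]
    · intro i _ j _ hij
      refine Set.disjoint_left.2 ?_
      rintro a ⟨_, hi⟩ ⟨_, hj⟩
      exact hij (hy (hi.symm.trans hj))
    · exact fun n _ => hA.inter (measurableSet_singleton _)
  refine ⟨fun n => μ.toJordanDecomposition.posPart.real {y n}
    - μ.toJordanDecomposition.negPart.real {y n}, ?_⟩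
  ext A hA
  conv_lhs => rw [← SignedMeasure.toSignedMeasure_toJordanDecomposition μ]
  rw [JordanDecomposition.toSignedMeasure, Measure.toSignedMeasure_sub_apply hA,
    key _ inferInstance z1 A hA, key _ inferInstance z2 A hA, ← Finset.sum_sub_distrib,
    sparseSub_apply _ _ hA]
  exact Finset.sum_congr rfl fun n _ => (sub_mul _ _ _).symm

end Measures

/-! ### Sufficient optimality conditions -/

section Optimality

lemma sInt_linear {α ι : Type*} [MeasurableSpace α] [Fintype ι] (μ : SignedMeasure α)
    (κ : ι → α → ℝ) (a : ι → ℝ)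
    (hp : ∀ j, Integrable (κ j) μ.toJordanDecomposition.posPart)
    (hn : ∀ j, Integrable (κ j) μ.toJordanDecomposition.negPart) :
    sInt μ (fun y => ∑ j, a j * κ j y) = ∑ j, a j * sInt μ (κ j) := by
  rw [sInt, integral_finsetSum _ fun j _ => (hp j).const_mul _,
    integral_finsetSum _ fun j _ => (hn j).const_mul _, ← Finset.sum_sub_distrib]
  refine Finset.sum_congr rfl fun j _ => ?_
  rw [integral_const_mul, integral_const_mul, sInt, mul_sub]

/-- Dual certificate argument: a sparse measure whose rescaled residual generates a function `η`
that interpolates the signs of the coefficients and has modulus `< 1` elsewhere is the only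
minimizer, provided that point evaluations at its support are linearly independent. -/
lemma unique_min_of_certificate {X : Type*} [TopologicalSpace X] [CompactSpace X]
    [MeasurableSpace X] [BorelSpace X] [T1Space X] {No N : ℕ} (κ : Fin No → X → ℝ)
    (hκ : ∀ j, Continuous (κ j)) (σ z : Fin No → ℝ) (hσ : ∀ j, 0 < σ j) (β : ℝ) (hβ : 0 < β)
    (q : Fin N → ℝ) (y : Fin N → X) (hy : Function.Injective y)
    (a : Fin No → ℝ) (ha : ∀ j, β * a j = -((∑ n, q n * κ j (y n) - z j) / σ j))
    (hsgn : ∀ n, q n * ∑ j, a j * κ j (y n) = |q n|)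
    (hle : ∀ n, |∑ j, a j * κ j (y n)| ≤ 1)
    (hlt : ∀ x, (∀ n, x ≠ y n) → |∑ j, a j * κ j x| < 1)
    (hind : LinearIndependent ℝ fun (n : Fin N) (j : Fin No) => κ j (y n)) (ν : SignedMeasure X) :
    ((1 / 2) * ∑ j, (sInt (sparseSub q y) (κ j) - z j) ^ 2 / σ j + β * mnorm (sparseSub q y) ≤
      (1 / 2) * ∑ j, (sInt ν (κ j) - z j) ^ 2 / σ j + β * mnorm ν) ∧
    ((1 / 2) * ∑ j, (sInt ν (κ j) - z j) ^ 2 / σ j + β * mnorm ν ≤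
      (1 / 2) * ∑ j, (sInt (sparseSub q y) (κ j) - z j) ^ 2 / σ j + β * mnorm (sparseSub q y) →
      ν = sparseSub q y) := by
  have hint : ∀ (f : X → ℝ), Continuous f → ∀ (m : Measure X) [IsFiniteMeasure m],
      Integrable f m := fun f hf m _ => by
    obtain ⟨C, hC⟩ := isCompact_univ.exists_bound_of_continuousOn hf.continuousOn
    exact Integrable.of_bound hf.measurable.aestronglyMeasurable C
      (Filter.Eventually.of_forall fun x => hC x trivial)
  have hηc : Continuous fun x => ∑ j, a j * κ j x :=
    continuous_finsetSum _ fun j _ => continuous_const.mul (hκ j)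
  have hη1 : ∀ x, |∑ j, a j * κ j x| ≤ 1 := fun x => by
    by_cases h : ∀ n, x ≠ y n
    · exact (hlt x h).le
    · push Not at h
      obtain ⟨n, rfl⟩ := h
      exact hle n
  have hνle := sInt_le_mnorm ν _ (hint _ hηc _) (hint _ hηc _) hη1
  have hlin : sInt ν (fun x => ∑ j, a j * κ j x) = ∑ j, a j * sInt ν (κ j) :=
    sInt_linear ν κ a (fun j => hint _ (hκ j) _) (fun j => hint _ (hκ j) _)
  have hqn : mnorm (sparseSub q y) = ∑ j, a j * sInt (sparseSub q y) (κ j) := by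
    rw [mnorm_sparseSub q y hy]
    simp only [sInt_sparseSub q y hy, ← hsgn, Finset.mul_sum]
    rw [Finset.sum_comm]
    exact Finset.sum_congr rfl fun j _ => Finset.sum_congr rfl fun n _ => by ring
  -- the quadratic term is expanded around `sparseSub q y`; the linear term is `-β ⟨η, ·⟩`
  have hexp : ∑ j, (sInt ν (κ j) - z j) ^ 2 / σ j =
      ∑ j, (sInt (sparseSub q y) (κ j) - z j) ^ 2 / σ j
      - 2 * β * (∑ j, a j * sInt ν (κ j) - ∑ j, a j * sInt (sparseSub q y) (κ j))
      + ∑ j, (sInt ν (κ j) - sInt (sparseSub q y) (κ j)) ^ 2 / σ j := by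
    rw [← Finset.sum_sub_distrib, Finset.mul_sum, ← Finset.sum_sub_distrib,
      ← Finset.sum_add_distrib]
    refine Finset.sum_congr rfl fun j _ => ?_
    have h1 := ha j
    rw [← sInt_sparseSub q y hy] at h1
    have h2 : 2 * β * (a j * sInt ν (κ j) - a j * sInt (sparseSub q y) (κ j)) =
      2 * (β * a j) * (sInt ν (κ j) - sInt (sparseSub q y) (κ j)) := by ring
    rw [h2, h1]
    have := (hσ j).ne'
    field_simp
    ring
  have hnn : ∀ j ∈ Finset.univ, 0 ≤ (sInt ν (κ j) - sInt (sparseSub q y) (κ j)) ^ 2 / σ j :=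
    fun j _ => div_nonneg (sq_nonneg _) (hσ j).le
  have hnn' := Finset.sum_nonneg hnn
  have hβle := mul_le_mul_of_nonneg_left hνle hβ.le
  rw [hlin] at hβle
  refine ⟨by rw [hexp, hqn]; linarith, fun hmin => ?_⟩
  rw [hexp, hqn] at hmin
  have hz : ∑ j, (sInt ν (κ j) - sInt (sparseSub q y) (κ j)) ^ 2 / σ j = 0 := by linarith
  have hK : ∀ j, sInt ν (κ j) = sInt (sparseSub q y) (κ j) := fun j => by
    have := (Finset.sum_eq_zero_iff_of_nonneg hnn).1 hz j (Finset.mem_univ _)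
    rw [div_eq_zero_iff, or_iff_left (hσ j).ne', sq_eq_zero_iff] at this
    linarith
  -- equality of the observations turns minimality of `ν` into equality in the duality bound
  have hmn : sInt ν (fun x => ∑ j, a j * κ j x) = mnorm ν := by
    refine le_antisymm hνle ?_
    rw [hlin]
    refine le_of_mul_le_mul_left ?_ hβ
    linarith
  obtain ⟨c, rfl⟩ := eq_sparseSub_of_sInt_eq ν _ (hint _ hηc _) (hint _ hηc _) hη1 y hy hlt hmn
  have hc : c = q := by
    have hsum : ∑ n, (c n - q n) • (fun j => κ j (y n)) = 0 := by
      ext j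
      have := hK j
      rw [sInt_sparseSub c y hy, sInt_sparseSub q y hy] at this
      simp only [Finset.sum_apply, Pi.smul_apply, smul_eq_mul, sub_mul, Finset.sum_sub_distrib,
        this, sub_self, Pi.zero_apply]
    funext n
    have := Fintype.linearIndependent_iff.1 hind _ hsum n
    linarith
  rw [hc]

end Optimality

open Filter Topology

/-! ### Stability of dual certificates -/

section Certificate

/-- The certificate `K* z`, for the kernel functions `κ j = k(x_j, ·)`. -/
def cert {V : Type*} {No : ℕ} (κ : Fin No → V → ℝ) (z : Fin No → ℝ) (y : V) : ℝ :=
  ∑ j, z j * κ j y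

lemma cert_smul {V : Type*} {No : ℕ} {κ : Fin No → V → ℝ} (s : ℝ) (z : Fin No → ℝ) :
    cert κ (s • z) = fun y => s * cert κ z y := by
  funext y
  simp [cert, Finset.mul_sum, mul_assoc]

variable {V : Type*} [NormedAddCommGroup V] [NormedSpace ℝ V]

lemma hasDerivAt_along {f : V → ℝ} (hf : ContDiff ℝ 2 f) (c v : V) (t : ℝ) :
    HasDerivAt (fun t : ℝ => f (c + t • v)) (fderiv ℝ f (c + t • v) v) t := by
  have h1 : HasDerivAt (fun t : ℝ => c + t • v) v t := by
    simpa using ((hasDerivAt_id t).smul_const v).const_add c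
  exact ((hf.differentiable (by norm_num)) _).hasFDerivAt.comp_hasDerivAt t h1

lemma hasDerivAt_fderiv_along {f : V → ℝ} (hf : ContDiff ℝ 2 f) (c v : V) (t : ℝ) :
    HasDerivAt (fun t : ℝ => fderiv ℝ f (c + t • v) v)
      (fderiv ℝ (fderiv ℝ f) (c + t • v) v v) t := by
  have h1 : HasDerivAt (fun t : ℝ => c + t • v) v t := by
    simpa using ((hasDerivAt_id t).smul_const v).const_add c
  have h2 : Differentiable ℝ (fderiv ℝ f) :=
    (hf.fderiv_right (m := 1) (by norm_num)).differentiable (by norm_num)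
  have h3 := (h2 (c + t • v)).hasFDerivAt.comp_hasDerivAt t h1
  simpa using h3.clm_apply (hasDerivAt_const t v)

/-- If the Hessian is negative definite on a convex set, a critical point in that set is the strict
maximum over it. -/
lemma lt_of_hessian_neg {f : V → ℝ} (hf : ContDiff ℝ 2 f) {B : Set V} (hB : Convex ℝ B)
    (hneg : ∀ y ∈ B, ∀ v, v ≠ 0 → fderiv ℝ (fderiv ℝ f) y v v < 0) {c y : V} (hc : c ∈ B)
    (hy : y ∈ B) (hcrit : fderiv ℝ f c = 0) (hne : y ≠ c) : f y < f c := by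
  have hmem : ∀ t ∈ Set.Icc (0 : ℝ) 1, c + t • (y - c) ∈ B := fun t ht =>
    hB.add_smul_sub_mem hc hy ht
  have hv : y - c ≠ 0 := sub_ne_zero.2 hne
  have anti1 : StrictAntiOn (fun t : ℝ => fderiv ℝ f (c + t • (y - c)) (y - c))
      (Set.Icc 0 1) := by
    refine strictAntiOn_of_deriv_neg (convex_Icc 0 1)
      (fun t _ => (hasDerivAt_fderiv_along hf c _ t).continuousAt.continuousWithinAt) ?_
    intro t ht
    rw [interior_Icc] at ht
    rw [(hasDerivAt_fderiv_along hf c _ t).deriv]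
    exact hneg _ (hmem t ⟨ht.1.le, ht.2.le⟩) _ hv
  have anti0 : StrictAntiOn (fun t : ℝ => f (c + t • (y - c))) (Set.Icc 0 1) := by
    refine strictAntiOn_of_deriv_neg (convex_Icc 0 1)
      (fun t _ => (hasDerivAt_along hf c _ t).continuousAt.continuousWithinAt) ?_
    intro t ht
    rw [interior_Icc] at ht
    rw [(hasDerivAt_along hf c _ t).deriv]
    have := anti1 (a := 0) (b := t) (by simp) ⟨ht.1.le, ht.2.le⟩ ht.1
    simpa [hcrit] using this
  have := anti0 (a := 0) (b := 1) (by simp) (by simp) one_pos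
  simpa using this

/-- Quadratic decay away from a maximum forces a negative definite Hessian. -/
lemma hessian_neg_of_decay {f : V → ℝ} (hf : ContDiff ℝ 2 f) {y₀ : V} {c : ℝ} (hc : 0 < c)
    (hdec : ∀ᶠ y in 𝓝 y₀, f y ≤ f y₀ - c * ‖y - y₀‖ ^ 2) {v : V} (hv : v ≠ 0) :
    fderiv ℝ (fderiv ℝ f) y₀ v v < 0 := by
  by_contra! hcon
  have hvn : 0 < ‖v‖ := norm_pos_iff.2 hv
  set b : ℝ := c * ‖v‖ ^ 2 with hb
  have hbpos : 0 < b := by positivity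
  -- If the second derivative along `v` were nonnegative, `h` would have a local minimum at 0.
  let h : ℝ → ℝ := fun t => f (y₀ + t • v) + b / 2 * t ^ 2
  have hd1 : ∀ t, HasDerivAt h (fderiv ℝ f (y₀ + t • v) v + b * t) t := fun t => by
    have h2 : HasDerivAt (fun t : ℝ => b / 2 * t ^ 2) (b * t) t := by
      refine ((hasDerivAt_pow 2 t).const_mul (b / 2)).congr_deriv ?_
      rw [Nat.cast_ofNat, Nat.add_one_sub_one, pow_one]
      ring
    exact (hasDerivAt_along hf y₀ v t).add h2
  have hd2 : HasDerivAt (fun t => fderiv ℝ f (y₀ + t • v) v + b * t)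
      (fderiv ℝ (fderiv ℝ f) (y₀ + (0 : ℝ) • v) v v + b) 0 := by
    have h2 : HasDerivAt (fun t : ℝ => b * t) b 0 := by
      simpa using (hasDerivAt_id (0 : ℝ)).const_mul b
    exact (hasDerivAt_fderiv_along hf y₀ v 0).add h2
  have hderiv : deriv h = fun t => fderiv ℝ f (y₀ + t • v) v + b * t :=
    funext fun t => (hd1 t).deriv
  have htend : Tendsto (fun t : ℝ => y₀ + t • v) (𝓝 0) (𝓝 y₀) := by
    have : ContinuousAt (fun t : ℝ => y₀ + t • v) 0 := by fun_prop
    simpa [ContinuousAt] using this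
  have hev : ∀ᶠ t in 𝓝 (0 : ℝ), h t ≤ h 0 - b / 2 * t ^ 2 := by
    filter_upwards [htend.eventually hdec] with t ht
    have e : c * ‖y₀ + t • v - y₀‖ ^ 2 = b * t ^ 2 := by
      rw [add_sub_cancel_left, norm_smul, mul_pow, Real.norm_eq_abs, sq_abs, hb]; ring
    rw [e] at ht
    simp only [h, zero_smul, add_zero]
    linarith
  have hmax : IsLocalMax h 0 := by
    filter_upwards [hev] with t ht
    nlinarith [mul_nonneg hbpos.le (sq_nonneg t)]
  have hmin : IsLocalMin h 0 := by
    refine isLocalMin_of_deriv_deriv_pos ?_ hmax.deriv_eq_zero (hd1 0).continuousAt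
    rw [hderiv, hd2.deriv]
    simp only [zero_smul, add_zero]
    linarith
  have hboth : ∀ᶠ t in 𝓝[≠] (0 : ℝ), False := by
    have h1 := (hev.and hmin).filter_mono (nhdsWithin_le_nhds (s := {0}ᶜ))
    filter_upwards [h1, self_mem_nhdsWithin] with t ht ht0
    have : 0 < b / 2 * t ^ 2 := by
      have : t ≠ 0 := ht0
      positivity
    linarith [ht.1, ht.2]
  exact (Filter.eventually_false_iff_eq_bot.1 hboth ▸ (inferInstance : (𝓝[≠] (0 : ℝ)).NeBot)).ne rfl

variable {No : ℕ} {κ : Fin No → V → ℝ}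

lemma cert_contDiff {n : WithTop ℕ∞} (hκ : ∀ j, ContDiff ℝ n (κ j)) (z : Fin No → ℝ) :
    ContDiff ℝ n (cert κ z) :=
  ContDiff.sum fun j _ => contDiff_const.mul (hκ j)

lemma fderiv_cert (hκ : ∀ j, ContDiff ℝ 2 (κ j)) (z : Fin No → ℝ) :
    fderiv ℝ (cert κ z) = fun y => ∑ j, z j • fderiv ℝ (κ j) y := by
  funext y
  have : HasFDerivAt (cert κ z) (∑ j, z j • fderiv ℝ (κ j) y) y :=
    HasFDerivAt.fun_sum fun j _ =>
      (((hκ j).differentiable (by norm_num)) y).hasFDerivAt.const_mul (z j)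
  exact this.fderiv

lemma fderiv_fderiv_cert (hκ : ∀ j, ContDiff ℝ 2 (κ j)) (z : Fin No → ℝ) (y : V) :
    fderiv ℝ (fderiv ℝ (cert κ z)) y = ∑ j, z j • fderiv ℝ (fderiv ℝ (κ j)) y := by
  rw [fderiv_cert hκ]
  have : HasFDerivAt (fun y => ∑ j, z j • fderiv ℝ (κ j) y)
      (∑ j, z j • fderiv ℝ (fderiv ℝ (κ j)) y) y :=
    HasFDerivAt.fun_sum fun j _ =>
      ((((hκ j).fderiv_right (m := 1) (by norm_num)).differentiable
        (by norm_num)) y).hasFDerivAt.const_smul (z j)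
  exact this.fderiv

lemma continuous_hessian_cert (hκ : ∀ j, ContDiff ℝ 2 (κ j)) :
    Continuous fun p : ((Fin No → ℝ) × V) × V =>
      fderiv ℝ (fderiv ℝ (cert κ p.1.1)) p.1.2 p.2 p.2 := by
  have h : ∀ j, Continuous (fderiv ℝ (fderiv ℝ (κ j))) := fun j =>
    ((hκ j).fderiv_right (m := 1) (by norm_num)).continuous_fderiv (by norm_num)
  simp only [fderiv_fderiv_cert hκ, FunLike.coe_sum, Finset.sum_apply, FunLike.coe_smul,
    Pi.smul_apply]
  refine continuous_finsetSum _ fun j _ => ?_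
  have h1 : Continuous fun p : ((Fin No → ℝ) × V) × V => fderiv ℝ (fderiv ℝ (κ j)) p.1.2 :=
    (h j).comp (continuous_snd.comp continuous_fst)
  exact ((continuous_apply j).comp (continuous_fst.comp continuous_fst)).smul
    ((h1.clm_apply continuous_snd).clm_apply continuous_snd)

lemma continuous_cert (hκ : ∀ j, ContDiff ℝ 2 (κ j)) :
    Continuous fun p : (Fin No → ℝ) × V => cert κ p.1 p.2 := by
  have := fun j => (hκ j).continuous
  unfold cert
  fun_prop

/-- Negative definiteness of the Hessian of a certificate is an open condition in the dual
variable and the base point. -/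
lemma eventually_hessian_neg [FiniteDimensional ℝ V] (hκ : ∀ j, ContDiff ℝ 2 (κ j))
    {z : Fin No → ℝ} {y : V}
    (hneg : ∀ v, v ≠ 0 → fderiv ℝ (fderiv ℝ (cert κ z)) y v v < 0) :
    ∀ᶠ p in 𝓝 (z, y), ∀ v, v ≠ 0 → fderiv ℝ (fderiv ℝ (cert κ p.1)) p.2 v v < 0 := by
  have hs : ∀ᶠ p in 𝓝 (z, y), ∀ v ∈ Metric.sphere (0 : V) 1,
      fderiv ℝ (fderiv ℝ (cert κ p.1)) p.2 v v < 0 := by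
    refine (isCompact_sphere (0 : V) 1).eventually_forall_of_forall_eventually fun v hv => ?_
    refine (continuous_hessian_cert hκ).continuousAt.eventually_lt continuousAt_const ?_
    exact hneg v (ne_zero_of_mem_unit_sphere ⟨v, hv⟩)
  filter_upwards [hs] with p hp v hv
  have hvn : 0 < ‖v‖ := norm_pos_iff.2 hv
  have h1 := hp (‖v‖⁻¹ • v) (by simp [norm_smul, hvn.ne'])
  simp only [map_smul, FunLike.coe_smul, Pi.smul_apply, smul_eq_mul] at h1
  have h2 : 0 < ‖v‖⁻¹ := by positivity
  by_contra! h3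
  have := mul_nonneg h2.le (mul_nonneg h2.le h3)
  linarith

/-- Near a point `y₀` where the certificate has modulus one: perturbed certificates with a critical
point of value `s` near `y₀` have modulus `< 1` at all other points near `y₀`. -/
lemma eventually_abs_lt_one_near [FiniteDimensional ℝ V] (hκ : ∀ j, ContDiff ℝ 2 (κ j))
    {z₀ : Fin No → ℝ} {y₀ : V} {s : ℝ} (hs : s ^ 2 = 1) (hval : cert κ z₀ y₀ = s)
    (hneg : ∀ v, v ≠ 0 → fderiv ℝ (fderiv ℝ (cert κ (s • z₀))) y₀ v v < 0) :
    ∃ r > 0, ∀ z ∈ Metric.ball z₀ r, ∀ c ∈ Metric.ball y₀ r, ∀ y ∈ Metric.ball y₀ r,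
      cert κ z c = s → fderiv ℝ (cert κ z) c = 0 → y ≠ c → |cert κ z y| < 1 := by
  have h1 := eventually_hessian_neg hκ hneg
  have hsm : Tendsto (fun p : (Fin No → ℝ) × V => (s • p.1, p.2)) (𝓝 (z₀, y₀))
      (𝓝 (s • z₀, y₀)) := by
    have : Continuous fun p : (Fin No → ℝ) × V => (s • p.1, p.2) := by fun_prop
    exact this.tendsto (z₀, y₀)
  have h2 := hsm.eventually h1
  have h3 : ∀ᶠ p in 𝓝 (z₀, y₀), -1 < s * cert κ p.1 p.2 := by
    refine continuousAt_const.eventually_lt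
      ((continuous_cert hκ).continuousAt.const_mul s) ?_
    simp only [hval]
    nlinarith
  obtain ⟨r, hr, hball⟩ := Metric.eventually_nhds_iff_ball.1 (h2.and h3)
  refine ⟨r, hr, fun z hz c hc y hy hv hcrit hne => ?_⟩
  rw [← ball_prod_same] at hball
  have hlt : cert κ (s • z) y < cert κ (s • z) c := by
    refine lt_of_hessian_neg (cert_contDiff hκ _) (convex_ball y₀ r)
      (fun w hw v hv => (hball (z, w) ⟨hz, hw⟩).1 v hv) hc hy ?_ hne
    rw [fderiv_cert hκ] at hcrit ⊢
    simp only [Pi.smul_apply, smul_assoc, ← Finset.smul_sum]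
    exact (congrArg (s • ·) hcrit).trans (smul_zero s)
  have hgt := (hball (z, y) ⟨hz, hy⟩).2
  simp only [cert_smul] at hlt
  rw [hv] at hlt
  have hss : s * s = 1 := by rw [← sq, hs]
  have habs : |s * cert κ z y| < 1 := abs_lt.2 ⟨hgt, by linarith⟩
  have hs1 : |s| = 1 := by
    rw [← sq_eq_sq₀ (abs_nonneg s) zero_le_one, sq_abs, hs, one_pow]
  rwa [abs_mul, hs1, one_mul] at habs

lemma sign_sq {a : ℝ} (ha : a ≠ 0) : Real.sign a ^ 2 = 1 := by
  rcases Real.sign_apply_eq_of_ne_zero a ha with h | h <;> rw [h] <;> norm_num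

/-- Stability of admissibility: a certificate close to an admissible one, which interpolates the
signs at nearby points with vanishing gradient there, has modulus `< 1` away from those points. -/
lemma certificate_stable {d Ns : ℕ} (hNs : 0 < Ns) {Ωs : Set (EuclideanSpace ℝ (Fin d))}
    (hΩ : IsCompact Ωs) {κ : Fin No → EuclideanSpace ℝ (Fin d) → ℝ}
    (hκ : ∀ j, ContDiff ℝ 2 (κ j)) {q : Fin Ns → ℝ} (hq : ∀ n, q n ≠ 0)
    {Y₀ : Fin Ns → EuclideanSpace ℝ (Fin d)} (hY : ∀ n, Y₀ n ∈ interior Ωs)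
    (hinj : Function.Injective Y₀) {θ : ℝ} (hθ : 0 < θ) {z₀ : Fin No → ℝ}
    (hadm : Admissible Ωs (fun n => |q n|) θ q Y₀ (cert κ z₀)) :
    ∀ᶠ p in 𝓝 (z₀, Y₀), (∀ n, cert κ p.1 (p.2 n) = Real.sign (q n)) →
      (∀ n, fderiv ℝ (cert κ p.1) (p.2 n) = 0) →
      ∀ y ∈ Ωs, (∀ n, y ≠ p.2 n) → |cert κ p.1 y| < 1 := by
  have : Nonempty (Fin Ns) := ⟨⟨0, hNs⟩⟩
  obtain ⟨hsgn, hbd⟩ := hadm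
  suffices H : ∀ᶠ p in 𝓝 (z₀, Y₀), ∀ y ∈ Ωs, (∀ n, cert κ p.1 (p.2 n) = Real.sign (q n)) →
      (∀ n, fderiv ℝ (cert κ p.1) (p.2 n) = 0) → (∀ n, y ≠ p.2 n) → |cert κ p.1 y| < 1 by
    filter_upwards [H] with p hp h1 h2 y hy h3
    exact hp y hy h1 h2 h3
  -- by compactness it suffices to argue near each point `y₀`, which may be one of the `Y₀ n`
  refine hΩ.eventually_forall_of_forall_eventually fun y₀ hy₀ => ?_
  by_cases hc : ∃ n, y₀ = Y₀ n
  · obtain ⟨n, rfl⟩ := hc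
    have hdec : ∀ᶠ y in 𝓝 (Y₀ n), cert κ (Real.sign (q n) • z₀) y ≤
        cert κ (Real.sign (q n) • z₀) (Y₀ n) - (θ * |q n|) * ‖y - Y₀ n‖ ^ 2 := by
      have e1 : ∀ᶠ y in 𝓝 (Y₀ n), ∀ i, |q n| * ‖y - Y₀ n‖ ^ 2 ≤ |q i| * ‖y - Y₀ i‖ ^ 2 := by
        rw [eventually_all]
        intro i
        by_cases hi : i = n
        · subst hi; exact Eventually.of_forall fun _ => le_rfl
        · have : ∀ᶠ y in 𝓝 (Y₀ n), |q n| * ‖y - Y₀ n‖ ^ 2 < |q i| * ‖y - Y₀ i‖ ^ 2 := by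
            refine ContinuousAt.eventually_lt (by fun_prop) (by fun_prop) ?_
            have h1 : 0 < ‖Y₀ n - Y₀ i‖ := norm_pos_iff.2 (sub_ne_zero.2 fun h => hi (hinj h).symm)
            have h2 : 0 < |q i| := abs_pos.2 (hq i)
            rw [sub_self, norm_zero, zero_pow two_ne_zero, mul_zero]
            positivity
          exact this.mono fun _ h => h.le
      have e2 : ∀ᶠ y in 𝓝 (Y₀ n), |q n| * ‖y - Y₀ n‖ ^ 2 < θ := by
        refine ContinuousAt.eventually_lt (by fun_prop) (by fun_prop) ?_
        simpa using hθ
      filter_upwards [e1, e2, mem_interior_iff_mem_nhds.1 (hY n)] with y h1 h2 hy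
      have hb := hbd y hy
      have hinf : (⨅ i, |q i| * ‖y - Y₀ i‖ ^ 2) = |q n| * ‖y - Y₀ n‖ ^ 2 :=
        le_antisymm (ciInf_le (Set.finite_range _).bddBelow n) (le_ciInf h1)
      rw [hinf, min_eq_right h2.le] at hb
      simp only [cert_smul]
      rw [hsgn n, ← sq, sign_sq (hq n)]
      have hle : Real.sign (q n) * cert κ z₀ y ≤ |cert κ z₀ y| := by
        rcases Real.sign_apply_eq_of_ne_zero _ (hq n) with h | h <;> rw [h]
        · linarith [neg_le_abs (cert κ z₀ y)]
        · linarith [le_abs_self (cert κ z₀ y)]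
      linarith
    have hqn : 0 < θ * |q n| := mul_pos hθ (abs_pos.2 (hq n))
    obtain ⟨r, hr, hloc⟩ := eventually_abs_lt_one_near hκ (sign_sq (hq n)) (hsgn n)
      fun v hv => hessian_neg_of_decay (cert_contDiff hκ _) hqn hdec hv
    have c1 : Tendsto (fun p : ((Fin No → ℝ) × (Fin Ns → EuclideanSpace ℝ (Fin d))) ×
        EuclideanSpace ℝ (Fin d) => p.1.1) (𝓝 ((z₀, Y₀), Y₀ n)) (𝓝 z₀) :=
      (continuous_fst.comp continuous_fst).tendsto ((z₀, Y₀), Y₀ n)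
    have c2 : Tendsto (fun p : ((Fin No → ℝ) × (Fin Ns → EuclideanSpace ℝ (Fin d))) ×
        EuclideanSpace ℝ (Fin d) => p.1.2 n) (𝓝 ((z₀, Y₀), Y₀ n)) (𝓝 (Y₀ n)) :=
      ((continuous_apply n).comp (continuous_snd.comp continuous_fst)).tendsto
        ((z₀, Y₀), Y₀ n)
    have c3 : Tendsto (fun p : ((Fin No → ℝ) × (Fin Ns → EuclideanSpace ℝ (Fin d))) ×
        EuclideanSpace ℝ (Fin d) => p.2) (𝓝 ((z₀, Y₀), Y₀ n)) (𝓝 (Y₀ n)) :=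
      continuous_snd.tendsto ((z₀, Y₀), Y₀ n)
    filter_upwards [c1 (Metric.ball_mem_nhds _ hr), c2 (Metric.ball_mem_nhds _ hr),
      c3 (Metric.ball_mem_nhds _ hr)] with p h1 h2 h3 hv hcrit hne
    exact hloc _ h1 _ h2 _ h3 (hv n) (hcrit n) (hne n)
  · push Not at hc
    have hb := hbd y₀ hy₀
    obtain ⟨i, hi⟩ := exists_eq_ciInf_of_finite (f := fun n => |q n| * ‖y₀ - Y₀ n‖ ^ 2)
    have hpos : 0 < ⨅ n, |q n| * ‖y₀ - Y₀ n‖ ^ 2 := by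
      rw [← hi]
      have h1 : 0 < ‖y₀ - Y₀ i‖ := norm_pos_iff.2 (sub_ne_zero.2 (hc i))
      have h2 : 0 < |q i| := abs_pos.2 (hq i)
      positivity
    have hlt : |cert κ z₀ y₀| < 1 := by
      have := mul_pos hθ (lt_min hθ hpos)
      linarith
    have hcont : Continuous fun p : ((Fin No → ℝ) × (Fin Ns → EuclideanSpace ℝ (Fin d))) ×
        EuclideanSpace ℝ (Fin d) => |cert κ p.1.1 p.2| :=
      ((continuous_cert hκ).comp ((continuous_fst.comp continuous_fst).prodMk
        continuous_snd)).abs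
    filter_upwards [hcont.continuousAt.eventually_lt continuousAt_const hlt] with p hp _ _ _
    exact hp

end Certificate

/-! ### The stationarity equation near the ground truth -/

section Stationarity

variable {d dO No Ns : ℕ}
  {k : EuclideanSpace ℝ (Fin dO) → EuclideanSpace ℝ (Fin d) → ℝ}

/-- Coordinates of a parameter perturbation `(δq; δy)`, indexed as the columns of the Jacobian. -/
def flat (m : (Fin Ns → ℝ) × (Fin Ns → EuclideanSpace ℝ (Fin d))) :
    (Fin Ns ⊕ Fin Ns × Fin d) → ℝ :=
  Sum.elim m.1 fun p => m.2 p.1 p.2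

lemma flat_injective : Function.Injective (flat (d := d) (Ns := Ns)) := by
  intro m m' h
  ext n
  · exact congrFun h (Sum.inl n)
  · rename_i i
    exact congrFun h (Sum.inr (n, i))

/-- The matrix `Jmat` represents the differential of `G`. -/
lemma Jmat_mulVec_flat (x : Fin No → EuclideanSpace ℝ (Fin dO)) (q : Fin Ns → ℝ)
    (y : Fin Ns → EuclideanSpace ℝ (Fin d))
    (δ : (Fin Ns → ℝ) × (Fin Ns → EuclideanSpace ℝ (Fin d))) (j : Fin No) :
    (Jmat k x q y *ᵥ flat δ) j =
      ∑ n, (q n * fderiv ℝ (k (x j)) (y n) (δ.2 n) + k (x j) (y n) * δ.1 n) := by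
  have hexp : ∀ n, fderiv ℝ (k (x j)) (y n) (δ.2 n) =
      ∑ i, δ.2 n i * fderiv ℝ (k (x j)) (y n) (EuclideanSpace.single i 1) := by
    intro n
    conv_lhs => rw [← (EuclideanSpace.basisFun (Fin d) ℝ).sum_repr (δ.2 n)]
    simp
  simp only [mulVec, dotProduct, Jmat, Matrix.of_apply, flat, Fintype.sum_sum_type, Sum.elim_inl,
    Sum.elim_inr, Fintype.sum_prod_type]
  rw [Finset.sum_add_distrib, add_comm]
  congr 1
  refine Finset.sum_congr rfl fun n _ => ?_
  rw [hexp, Finset.mul_sum]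
  exact Finset.sum_congr rfl fun i _ => by ring

lemma hasFDerivAt_Gfun (hk : ∀ x, ContDiff ℝ 3 (k x)) (x : Fin No → EuclideanSpace ℝ (Fin dO))
    (m : (Fin Ns → ℝ) × (Fin Ns → EuclideanSpace ℝ (Fin d))) (j : Fin No) :
    ∃ L : ((Fin Ns → ℝ) × (Fin Ns → EuclideanSpace ℝ (Fin d))) →L[ℝ] ℝ,
      HasFDerivAt (fun m => Gfun k x m j) L m ∧ ∀ δ, L δ = (Jmat k x m.1 m.2 *ᵥ flat δ) j := by
  have hq : ∀ n, HasFDerivAt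
      (fun m : (Fin Ns → ℝ) × (Fin Ns → EuclideanSpace ℝ (Fin d)) => m.1 n)
      ((ContinuousLinearMap.proj n).comp (ContinuousLinearMap.fst ℝ _ _)) m := fun n =>
    hasFDerivAt_pi'.1 hasFDerivAt_fst n
  have hy : ∀ n, HasFDerivAt
      (fun m : (Fin Ns → ℝ) × (Fin Ns → EuclideanSpace ℝ (Fin d)) => m.2 n)
      ((ContinuousLinearMap.proj n).comp (ContinuousLinearMap.snd ℝ _ _)) m := fun n =>
    hasFDerivAt_pi'.1 hasFDerivAt_snd n
  refine ⟨_, HasFDerivAt.fun_sum fun n _ => (hq n).mul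
    ((((hk (x j)).differentiable (by norm_num)) (m.2 n)).hasFDerivAt.comp m (hy n)), fun δ => ?_⟩
  rw [Jmat_mulVec_flat]
  simp

lemma contDiff_Gfun (hk : ∀ x, ContDiff ℝ 3 (k x)) (x : Fin No → EuclideanSpace ℝ (Fin dO))
    (j : Fin No) : ContDiff ℝ 1
      fun m : (Fin Ns → ℝ) × (Fin Ns → EuclideanSpace ℝ (Fin d)) => Gfun k x m j := by
  refine ContDiff.sum fun n _ => ?_
  have h1 : ContDiff ℝ 1 (k (x j)) := (hk (x j)).of_le (by norm_num)
  exact ((contDiff_apply ℝ ℝ n).comp contDiff_fst).mul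
    (h1.comp ((contDiff_apply ℝ (EuclideanSpace ℝ (Fin d)) n).comp contDiff_snd))

lemma contDiff_Jmat (hk : ∀ x, ContDiff ℝ 3 (k x)) (x : Fin No → EuclideanSpace ℝ (Fin dO))
    (j : Fin No) (c : Fin Ns ⊕ Fin Ns × Fin d) : ContDiff ℝ 1
      fun m : (Fin Ns → ℝ) × (Fin Ns → EuclideanSpace ℝ (Fin d)) => Jmat k x m.1 m.2 j c := by
  have hy : ∀ n, ContDiff ℝ 1
      fun m : (Fin Ns → ℝ) × (Fin Ns → EuclideanSpace ℝ (Fin d)) => m.2 n := fun n =>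
    (contDiff_apply ℝ (EuclideanSpace ℝ (Fin d)) n).comp contDiff_snd
  rcases c with n | ⟨n, i⟩
  · have h1 : ContDiff ℝ 1 (k (x j)) := (hk (x j)).of_le (by norm_num)
    exact h1.comp (hy n)
  · have h1 : ContDiff ℝ 1 (fderiv ℝ (k (x j))) := (hk (x j)).fderiv_right (by norm_num)
    exact ((contDiff_apply ℝ ℝ n).comp contDiff_fst).mul
      ((h1.comp (hy n)).clm_apply contDiff_const)

lemma Smap_apply (x : Fin No → EuclideanSpace ℝ (Fin dO)) (σ0 : Fin No → ℝ)
    (mdag : (Fin Ns → ℝ) × (Fin Ns → EuclideanSpace ℝ (Fin d)))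
    (ε : Fin No → ℝ) (β : ℝ) (m : (Fin Ns → ℝ) × (Fin Ns → EuclideanSpace ℝ (Fin d)))
    (c : Fin Ns ⊕ Fin Ns × Fin d) :
    Smap k x σ0 mdag ε β m c =
      ∑ j, Jmat k x m.1 m.2 j c * ((Gfun k x m j - Gfun k x mdag j - ε j) / σ0 j) +
        β * rho0 d mdag.1 c := by
  simp [Smap, mulVec, dotProduct]

/-- A solution of the normal equations `Jᵀ Σ₀⁻¹ J w = 0` lies in the kernel of `J`. -/
lemma mulVec_eq_zero_of_normal {ι : Type*} [Fintype ι] (J : Matrix (Fin No) ι ℝ)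
    {σ0 : Fin No → ℝ} (hσ0 : ∀ j, 0 < σ0 j) (w : ι → ℝ)
    (h : ∀ c, ∑ j, J j c * ((J *ᵥ w) j / σ0 j) = 0) : J *ᵥ w = 0 := by
  have h1 : ∑ j, (J *ᵥ w) j ^ 2 / σ0 j = 0 := by
    have : ∑ c, w c * ∑ j, J j c * ((J *ᵥ w) j / σ0 j) = 0 := by simp [h]
    rw [← this]
    simp only [Finset.mul_sum]
    rw [Finset.sum_comm]
    refine Finset.sum_congr rfl fun j _ => ?_
    have h2 : (J *ᵥ w) j ^ 2 / σ0 j = (J *ᵥ w) j * ((J *ᵥ w) j / σ0 j) := by ring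
    rw [h2]
    conv_lhs => rw [mulVec, dotProduct, Finset.sum_mul]
    exact Finset.sum_congr rfl fun c _ => by rw [mulVec, dotProduct]; ring
  have hnn : ∀ j ∈ Finset.univ, 0 ≤ (J *ᵥ w) j ^ 2 / σ0 j :=
    fun j _ => div_nonneg (sq_nonneg _) (hσ0 j).le
  ext j
  have := (Finset.sum_eq_zero_iff_of_nonneg hnn).1 h1 j (Finset.mem_univ _)
  rw [div_eq_zero_iff, or_iff_left (hσ0 j).ne', sq_eq_zero_iff] at this
  exact this

/-- The Fisher matrix acts as `Jᵀ Σ₀⁻¹ J`. -/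
lemma Fisher_mulVec (x : Fin No → EuclideanSpace ℝ (Fin dO)) (σ0 : Fin No → ℝ)
    (q : Fin Ns → ℝ) (y : Fin Ns → EuclideanSpace ℝ (Fin d)) (w : Fin Ns ⊕ Fin Ns × Fin d → ℝ)
    (c : Fin Ns ⊕ Fin Ns × Fin d) :
    (Fisher k x σ0 q y *ᵥ w) c = ∑ j, Jmat k x q y j c * ((Jmat k x q y *ᵥ w) j / σ0 j) := by
  rw [Fisher, ← mulVec_mulVec, ← mulVec_mulVec]
  have : diagonal (fun j => (σ0 j)⁻¹) *ᵥ (Jmat k x q y *ᵥ w) =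
      fun j => (Jmat k x q y *ᵥ w) j / σ0 j := by
    ext j
    rw [mulVec_diagonal]
    ring
  rw [this]
  simp only [mulVec, dotProduct, transpose_apply]

lemma Fisher_inv_mulVec {x : Fin No → EuclideanSpace ℝ (Fin dO)} {σ0 : Fin No → ℝ}
    (hσ0 : ∀ j, 0 < σ0 j) {q : Fin Ns → ℝ} {y : Fin Ns → EuclideanSpace ℝ (Fin d)}
    (hrank : Function.Injective (Jmat k x q y).mulVec) {w r : Fin Ns ⊕ Fin Ns × Fin d → ℝ}
    (h : Fisher k x σ0 q y *ᵥ w = r) : (Fisher k x σ0 q y)⁻¹ *ᵥ r = w := by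
  have hinj : Function.Injective (Fisher k x σ0 q y).mulVec := by
    intro a b hab
    have h0 : Fisher k x σ0 q y *ᵥ (a - b) = 0 := by
      rw [mulVec_sub]; exact sub_eq_zero.2 hab
    have h1 := mulVec_eq_zero_of_normal (Jmat k x q y) hσ0 (a - b) fun c => by
      rw [← Fisher_mulVec, h0]; rfl
    exact sub_eq_zero.1 (hrank (h1.trans (mulVec_zero _).symm))
  have hu : IsUnit (Fisher k x σ0 q y) := mulVec_injective_iff_isUnit.1 hinj
  rw [← h, mulVec_mulVec, nonsing_inv_mul _ ((isUnit_iff_isUnit_det _).1 hu), one_mulVec]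

/-- Local solution branch of the stationarity equation. Near `(ε, β) = 0` and `m†` the solution set
is the graph of a function `φ`, and the weighted residual along `φ` is differentiable at `0`, its
derivative in direction `β` being minus the minimal-norm dual variable
`z† = Σ₀⁻¹ G'(m†) I₀⁻¹ (ρ; 0)`. -/
lemma exists_solution_branch (hk : ∀ x, ContDiff ℝ 3 (k x))
    (x : Fin No → EuclideanSpace ℝ (Fin dO)) {σ0 : Fin No → ℝ} (hσ0 : ∀ j, 0 < σ0 j)
    (m₀ : (Fin Ns → ℝ) × (Fin Ns → EuclideanSpace ℝ (Fin d)))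
    (hrank : Function.Injective (Jmat k x m₀.1 m₀.2).mulVec) :
    ∃ φ : (Fin No → ℝ) × ℝ → (Fin Ns → ℝ) × (Fin Ns → EuclideanSpace ℝ (Fin d)),
      Tendsto φ (𝓝 0) (𝓝 m₀) ∧ φ 0 = m₀ ∧
      (∀ᶠ u in 𝓝 ((0 : (Fin No → ℝ) × ℝ), m₀),
        Smap k x σ0 m₀ u.1.1 u.1.2 u.2 = 0 ↔ φ u.1 = u.2) ∧
      (∀ᶠ p in 𝓝 (0 : (Fin No → ℝ) × ℝ), Smap k x σ0 m₀ p.1 p.2 (φ p) = 0) ∧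
      ∀ j, ∃ H : ((Fin No → ℝ) × ℝ) →L[ℝ] ℝ,
        HasFDerivAt (fun p => (Gfun k x (φ p) j - Gfun k x m₀ j - p.1 j) / σ0 j) H 0 ∧
        H (0, 1) = -((σ0 j)⁻¹ *
          (Jmat k x m₀.1 m₀.2 *ᵥ ((Fisher k x σ0 m₀.1 m₀.2)⁻¹ *ᵥ rho0 d m₀.1)) j) := by
  set F : ((Fin No → ℝ) × ℝ) × ((Fin Ns → ℝ) × (Fin Ns → EuclideanSpace ℝ (Fin d))) →
    (Fin Ns ⊕ Fin Ns × Fin d) → ℝ := fun u => Smap k x σ0 m₀ u.1.1 u.1.2 u.2 with hF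
  have hF0 : F (0, m₀) = 0 := by
    ext c
    simp [hF, Smap_apply]
  have hFc : ContDiff ℝ 1 F := by
    rw [contDiff_pi]
    intro c
    simp only [hF, Smap_apply]
    refine (ContDiff.sum fun j _ => ?_).add ?_
    · refine ((contDiff_Jmat hk x j c).comp contDiff_snd).mul (ContDiff.div_const ?_ _)
      exact (((contDiff_Gfun hk x j).comp contDiff_snd).sub contDiff_const).sub
        ((contDiff_apply ℝ ℝ j).comp (contDiff_fst.comp contDiff_fst))
    · exact (contDiff_snd.comp contDiff_fst).mul contDiff_const
  have hA : HasStrictFDerivAt F (fderiv ℝ F (0, m₀)) (0, m₀) :=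
    hFc.contDiffAt.hasStrictFDerivAt (by norm_num)
  set A := fderiv ℝ F (0, m₀) with hAdef
  choose L hL hLv using fun j => hasFDerivAt_Gfun hk x m₀ j
  -- the residual vanishes at `(0, m₀)`, so only its own derivative enters the product rule
  have hAv : ∀ v c, A v c = ∑ j, Jmat k x m₀.1 m₀.2 j c *
      (((Jmat k x m₀.1 m₀.2 *ᵥ flat v.2) j - v.1.1 j) / σ0 j) + v.1.2 * rho0 d m₀.1 c := by
    intro v c
    let E₁ : ((Fin No → ℝ) × ℝ) × ((Fin Ns → ℝ) × (Fin Ns → EuclideanSpace ℝ (Fin d))) →L[ℝ]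
      (Fin No → ℝ) × ℝ := ContinuousLinearMap.fst ℝ _ _
    let E₂ : ((Fin No → ℝ) × ℝ) × ((Fin Ns → ℝ) × (Fin Ns → EuclideanSpace ℝ (Fin d))) →L[ℝ]
      (Fin Ns → ℝ) × (Fin Ns → EuclideanSpace ℝ (Fin d)) := ContinuousLinearMap.snd ℝ _ _
    have hR : ∀ j, HasFDerivAt (fun u : ((Fin No → ℝ) × ℝ) ×
        ((Fin Ns → ℝ) × (Fin Ns → EuclideanSpace ℝ (Fin d))) =>
        (Gfun k x u.2 j - Gfun k x m₀ j - u.1.1 j) / σ0 j)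
        ((σ0 j)⁻¹ • ((L j).comp E₂ - (ContinuousLinearMap.proj j).comp
          ((ContinuousLinearMap.fst ℝ _ _).comp E₁))) (0, m₀) := by
      intro j
      have h1 : HasFDerivAt (fun u : ((Fin No → ℝ) × ℝ) ×
        ((Fin Ns → ℝ) × (Fin Ns → EuclideanSpace ℝ (Fin d))) => Gfun k x u.2 j)
          ((L j).comp E₂) (0, m₀) :=
        HasFDerivAt.comp (g := fun m => Gfun k x m j) (0, m₀) (hL j) E₂.hasFDerivAt
      have h2 : HasFDerivAt (fun u : ((Fin No → ℝ) × ℝ) ×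
        ((Fin Ns → ℝ) × (Fin Ns → EuclideanSpace ℝ (Fin d))) => u.1.1 j)
          ((ContinuousLinearMap.proj j).comp ((ContinuousLinearMap.fst ℝ _ _).comp E₁)) (0, m₀) :=
        ((ContinuousLinearMap.proj (R := ℝ) (φ := fun _ : Fin No => ℝ) j).comp
          ((ContinuousLinearMap.fst ℝ _ _).comp E₁)).hasFDerivAt
      have h3 := ((h1.sub_const (Gfun k x m₀ j)).sub h2).const_mul ((σ0 j)⁻¹)
      refine h3.congr_of_eventuallyEq (Eventually.of_forall fun u => ?_)
      simp only [Pi.sub_apply]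
      ring
    have hJ : ∀ j, HasFDerivAt (fun u : ((Fin No → ℝ) × ℝ) ×
        ((Fin Ns → ℝ) × (Fin Ns → EuclideanSpace ℝ (Fin d))) => Jmat k x u.2.1 u.2.2 j c)
        (fderiv ℝ (fun u : ((Fin No → ℝ) × ℝ) ×
        ((Fin Ns → ℝ) × (Fin Ns → EuclideanSpace ℝ (Fin d))) => Jmat k x u.2.1 u.2.2 j c)
          (0, m₀)) (0, m₀) := fun j =>
      ((((contDiff_Jmat hk x j c).comp contDiff_snd).differentiable
        (by norm_num)) (0, m₀)).hasFDerivAt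
    have hβ : HasFDerivAt (fun u : ((Fin No → ℝ) × ℝ) ×
        ((Fin Ns → ℝ) × (Fin Ns → EuclideanSpace ℝ (Fin d))) => u.1.2)
        ((ContinuousLinearMap.snd ℝ _ _).comp E₁) (0, m₀) :=
      ((ContinuousLinearMap.snd ℝ (Fin No → ℝ) ℝ).comp E₁).hasFDerivAt
    have hsum := (HasFDerivAt.fun_sum (u := Finset.univ) fun j _ => (hJ j).mul (hR j)).add
      (hβ.mul_const (rho0 d m₀.1 c))
    have hcomp := (hasFDerivAt_pi'.1 hA.hasFDerivAt) c
    have heq := hcomp.unique (hsum.congr_of_eventuallyEq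
      (Eventually.of_forall fun u => Smap_apply x σ0 m₀ u.1.1 u.1.2 u.2 c))
    have := DFunLike.congr_fun heq v
    simp only [ContinuousLinearMap.comp_apply, ContinuousLinearMap.proj_apply] at this
    rw [this]
    simp [hLv, E₁, E₂, div_eq_inv_mul]
    ring
  -- the partial derivative in `m` is `Jᵀ Σ₀⁻¹ J`, which is injective by the rank condition
  have hinv : (A ∘L .inr ℝ ((Fin No → ℝ) × ℝ)
      ((Fin Ns → ℝ) × (Fin Ns → EuclideanSpace ℝ (Fin d)))).IsInvertible := by
    have hinj : Function.Injective (A ∘L .inr ℝ ((Fin No → ℝ) × ℝ)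
      ((Fin Ns → ℝ) × (Fin Ns → EuclideanSpace ℝ (Fin d)))) := by
      rw [injective_iff_map_eq_zero]
      intro δ hδ
      have h1 := mulVec_eq_zero_of_normal (Jmat k x m₀.1 m₀.2) hσ0 (flat δ) fun c => by
        have := congrFun hδ c
        rw [ContinuousLinearMap.comp_apply, hAv] at this
        simpa using this
      refine flat_injective ((hrank (h1.trans (mulVec_zero _).symm)).trans ?_)
      ext c
      rcases c with n | ⟨n, i⟩ <;> simp [flat]
    have hrk : Module.finrank ℝ ((Fin Ns → ℝ) × (Fin Ns → EuclideanSpace ℝ (Fin d))) =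
        Module.finrank ℝ ((Fin Ns ⊕ Fin Ns × Fin d) → ℝ) := by
      simp [Module.finrank_prod, Module.finrank_pi_fintype]
    refine ⟨(LinearEquiv.ofInjectiveOfFinrankEq _ hinj hrk).toContinuousLinearEquiv, ?_⟩
    exact ContinuousLinearMap.ext fun δ => rfl
  set φ := hA.implicitFunctionOfProdDomain hinv with hφ
  have hev := hA.eventually_apply_eq_iff_implicitFunctionOfProdDomain hinv
  have hev2 := hA.eventually_apply_implicitFunctionOfProdDomain hinv
  have hder := (hA.hasStrictFDerivAt_implicitFunctionOfProdDomain hinv).hasFDerivAt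
  have htend := hA.tendsto_implicitFunctionOfProdDomain hinv
  rw [← hφ] at hev hev2 hder htend
  rw [hF0] at hev hev2
  have hφ0 : φ 0 = m₀ := (hev.self_of_nhds).1 hF0
  refine ⟨φ, htend, hφ0, hev, hev2, fun j => ?_⟩
  set φ' := -(A ∘L .inr ℝ ((Fin No → ℝ) × ℝ)
      ((Fin Ns → ℝ) × (Fin Ns → EuclideanSpace ℝ (Fin d)))).inverse ∘L (A ∘L .inl ℝ _ _) with hφ'
  have hder : HasFDerivAt φ φ' 0 := hder
  -- the stationarity equation differentiated along the branch
  have hA0 : ∀ p, A (p, φ' p) = 0 := by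
    intro p
    have h1 : HasFDerivAt (fun p => F (p, φ p)) (A.comp ((ContinuousLinearMap.id ℝ _).prod φ'))
        0 := by
      have hA2 := hA.hasFDerivAt
      rw [← hφ0] at hA2
      exact hA2.comp (0 : (Fin No → ℝ) × ℝ) ((hasFDerivAt_id _).prodMk hder)
    have h2 : HasFDerivAt (fun p => F (p, φ p)) (0 : _ →L[ℝ] _) 0 :=
      (hasFDerivAt_const (0 : (Fin Ns ⊕ Fin Ns × Fin d) → ℝ) _).congr_of_eventuallyEq hev2
    exact DFunLike.congr_fun (h1.unique h2) p
  refine ⟨(σ0 j)⁻¹ • ((L j).comp φ' - (ContinuousLinearMap.proj j).comp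
          (ContinuousLinearMap.fst ℝ _ _)), ?_, ?_⟩
  · have hLj := hL j
    rw [← hφ0] at hLj
    have h1 : HasFDerivAt (fun p => Gfun k x (φ p) j) ((L j).comp φ') 0 :=
      HasFDerivAt.comp (g := fun m => Gfun k x m j) 0 hLj hder
    have h2 : HasFDerivAt (fun u : (Fin No → ℝ) × ℝ => u.1 j)
          ((ContinuousLinearMap.proj j).comp (ContinuousLinearMap.fst ℝ _ _)) 0 :=
      hasFDerivAt_pi'.1 hasFDerivAt_fst j
    have h3 := ((h1.sub_const (Gfun k x m₀ j)).sub h2).const_mul ((σ0 j)⁻¹)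
    refine h3.congr_of_eventuallyEq (Eventually.of_forall fun u => ?_)
    simp only [Pi.sub_apply]
    ring
  · have h1 : Fisher k x σ0 m₀.1 m₀.2 *ᵥ (-flat (φ' (0, 1))) = rho0 d m₀.1 := by
      rw [mulVec_neg]
      ext c
      have := congrFun (hA0 (0, 1)) c
      rw [hAv] at this
      simp only [Pi.zero_apply, sub_zero, one_mul] at this
      rw [Pi.neg_apply, Fisher_mulVec]
      linarith
    rw [Fisher_inv_mulVec hσ0 hrank h1, mulVec_neg]
    simp [hLv]

end Stationarity

/-! ### Small noise and small regularization parameter -/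

section SmallNoise

/-- Every neighborhood contains a `W†`-norm ball, because all weights are nonzero. -/
lemma exists_Wnorm_ball_subset {d Ns : ℕ} {qd : Fin Ns → ℝ} (hqd : ∀ n, qd n ≠ 0)
    (m₀ : (Fin Ns → ℝ) × (Fin Ns → EuclideanSpace ℝ (Fin d)))
    {P : (Fin Ns → ℝ) × (Fin Ns → EuclideanSpace ℝ (Fin d)) → Prop} (hP : ∀ᶠ m in 𝓝 m₀, P m) :
    ∃ r > 0, ∀ m, Wnorm qd (m - m₀) ≤ 3 / 2 * r → P m := by
  obtain ⟨δ, hδ, hball⟩ := Metric.eventually_nhds_iff.1 hP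
  have habs : ∀ n, 0 < |qd n| := fun n => abs_pos.2 (hqd n)
  -- a common bound for the constants in `|δq_n|² ≤ 4|q_n| ‖·‖_W²` and `‖δy_n‖² ≤ |q_n|⁻¹ ‖·‖_W²`
  set M : ℝ := 1 + ∑ n, (4 * |qd n| + |qd n|⁻¹) with hM
  have hterm : ∀ n, 0 < 4 * |qd n| + |qd n|⁻¹ := fun n => by have := habs n; positivity
  have hM1 : 0 < M := by
    have : 0 ≤ ∑ n, (4 * |qd n| + |qd n|⁻¹) := Finset.sum_nonneg fun n _ => (hterm n).le
    linarith
  have hMn : ∀ n, 4 * |qd n| + |qd n|⁻¹ ≤ M := fun n => by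
    have := Finset.single_le_sum (f := fun n => 4 * |qd n| + |qd n|⁻¹)
      (fun i _ => (hterm i).le) (Finset.mem_univ n)
    linarith
  have hsM : 0 < Real.sqrt M := Real.sqrt_pos.2 hM1
  refine ⟨δ / (3 * Real.sqrt M), by positivity, fun m hm => hball ?_⟩
  set w := m - m₀ with hw
  have hsq0 : 0 ≤ WnormSq qd w := add_nonneg
    (Finset.sum_nonneg fun n _ => by have := habs n; positivity)
    (Finset.sum_nonneg fun n _ => by have := habs n; positivity)
  have hsq : WnormSq qd w * M < δ ^ 2 := by
    have h1 : Wnorm qd w * Real.sqrt M ≤ δ / 2 := by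
      calc _ ≤ 3 / 2 * (δ / (3 * Real.sqrt M)) * Real.sqrt M :=
            mul_le_mul_of_nonneg_right hm hsM.le
        _ = δ / 2 := by field_simp
    have h2 : WnormSq qd w * M = (Wnorm qd w * Real.sqrt M) ^ 2 := by
      rw [mul_pow, Wnorm, Real.sq_sqrt hsq0, Real.sq_sqrt hM1.le]
    have h3 : 0 ≤ Wnorm qd w * Real.sqrt M := mul_nonneg (Real.sqrt_nonneg _) hsM.le
    rw [h2]
    nlinarith
  have hq : ∀ n, w.1 n ^ 2 / (4 * |qd n|) ≤ WnormSq qd w := fun n => by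
    have h1 := Finset.single_le_sum (f := fun n => w.1 n ^ 2 / (4 * |qd n|))
      (fun i _ => by have := habs i; positivity) (Finset.mem_univ n)
    have h2 : 0 ≤ ∑ n, |qd n| * ‖w.2 n‖ ^ 2 :=
      Finset.sum_nonneg fun n _ => by have := habs n; positivity
    unfold WnormSq
    linarith
  have hy : ∀ n, |qd n| * ‖w.2 n‖ ^ 2 ≤ WnormSq qd w := fun n => by
    have h1 := Finset.single_le_sum (f := fun n => |qd n| * ‖w.2 n‖ ^ 2)
      (fun i _ => by have := habs i; positivity) (Finset.mem_univ n)
    have h2 : 0 ≤ ∑ n, w.1 n ^ 2 / (4 * |qd n|) :=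
      Finset.sum_nonneg fun n _ => by have := habs n; positivity
    unfold WnormSq
    linarith
  rw [dist_eq_norm, ← hw, Prod.norm_def, max_lt_iff, pi_norm_lt_iff hδ, pi_norm_lt_iff hδ]
  constructor
  · intro n
    have h1 := (div_le_iff₀ (by have := habs n; positivity)).1 (hq n)
    have h2 : 4 * |qd n| ≤ M := by
      have := inv_pos.2 (habs n)
      linarith [hMn n]
    have h3 := mul_le_mul_of_nonneg_left h2 hsq0
    rw [Real.norm_eq_abs]
    refine abs_lt_of_sq_lt_sq ?_ hδ.le
    linarith
  · intro n
    have h1 : ‖w.2 n‖ ^ 2 ≤ WnormSq qd w * |qd n|⁻¹ := by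
      rw [← div_eq_mul_inv, le_div_iff₀ (habs n), mul_comm]
      exact hy n
    have h2 : |qd n|⁻¹ ≤ M := by linarith [hMn n, habs n]
    have h3 := mul_le_mul_of_nonneg_left h2 hsq0
    refine lt_of_pow_lt_pow_left₀ 2 hδ.le ?_
    linarith

variable {No : ℕ} {σ0 : Fin No → ℝ}

/-- The filter of data `(ε, β)` with `β > 0`, `‖ε‖ + β → 0` and `‖ε‖ / β → 0`. -/
def smallNoise (σ0 : Fin No → ℝ) : Filter ((Fin No → ℝ) × ℝ) :=
  comap (fun p => (enorm σ0 p.1 + p.2, enorm σ0 p.1 / p.2)) (𝓝 ((0 : ℝ), (0 : ℝ))) ⊓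
    𝓟 {p | 0 < p.2}

lemma smallNoise_fst : Tendsto (fun p : (Fin No → ℝ) × ℝ => enorm σ0 p.1 + p.2) (smallNoise σ0)
    (𝓝 0) :=
  ((continuous_fst.tendsto ((0 : ℝ), (0 : ℝ))).comp tendsto_comap).mono_left inf_le_left

lemma smallNoise_snd : Tendsto (fun p : (Fin No → ℝ) × ℝ => enorm σ0 p.1 / p.2) (smallNoise σ0)
    (𝓝 0) :=
  ((continuous_snd.tendsto ((0 : ℝ), (0 : ℝ))).comp tendsto_comap).mono_left inf_le_left

lemma smallNoise_pos : ∀ᶠ p in smallNoise σ0, 0 < p.2 :=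
  mem_inf_of_right (mem_principal_self _)

lemma abs_le_enorm (hσ0 : ∀ j, 0 < σ0 j) (ε : Fin No → ℝ) (j : Fin No) :
    |ε j| ≤ Real.sqrt (σ0 j) * enorm σ0 ε := by
  rw [show enorm σ0 ε = Real.sqrt (∑ j, ε j ^ 2 / σ0 j) from rfl,
    ← Real.sqrt_mul (hσ0 j).le, ← Real.sqrt_sq_eq_abs]
  refine Real.sqrt_le_sqrt ?_
  have := Finset.single_le_sum (f := fun j => ε j ^ 2 / σ0 j)
    (fun i _ => div_nonneg (sq_nonneg _) (hσ0 i).le) (Finset.mem_univ j)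
  rw [div_le_iff₀ (hσ0 j)] at this
  linarith

lemma smallNoise_beta : Tendsto (fun p : (Fin No → ℝ) × ℝ => p.2) (smallNoise σ0) (𝓝 0) := by
  refine squeeze_zero' (smallNoise_pos.mono fun p hp => hp.le)
    (Eventually.of_forall fun p => ?_) smallNoise_fst
  have : 0 ≤ enorm σ0 p.1 := Real.sqrt_nonneg _
  linarith

lemma tendsto_smallNoise (hσ0 : ∀ j, 0 < σ0 j) :
    Tendsto id (smallNoise σ0) (𝓝 (0 : (Fin No → ℝ) × ℝ)) := by
  have h1 : Tendsto (fun p : (Fin No → ℝ) × ℝ => p.1) (smallNoise σ0) (𝓝 0) := by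
    rw [tendsto_pi_nhds]
    intro j
    have hb := (smallNoise_fst (σ0 := σ0)).const_mul (Real.sqrt (σ0 j))
    rw [mul_zero] at hb
    refine squeeze_zero_norm' (smallNoise_pos.mono fun p hp => ?_) hb
    rw [Real.norm_eq_abs]
    refine (abs_le_enorm hσ0 p.1 j).trans ?_
    exact mul_le_mul_of_nonneg_left (by linarith) (Real.sqrt_nonneg _)
  exact h1.prodMk_nhds smallNoise_beta

lemma tendsto_smallNoise_smul (hσ0 : ∀ j, 0 < σ0 j) :
    Tendsto (fun p : (Fin No → ℝ) × ℝ => p.2⁻¹ • id p) (smallNoise σ0) (𝓝 (0, 1)) := by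
  have h1 : Tendsto (fun p : (Fin No → ℝ) × ℝ => p.2⁻¹ • p.1) (smallNoise σ0) (𝓝 0) := by
    rw [tendsto_pi_nhds]
    intro j
    have hb := (smallNoise_snd (σ0 := σ0)).const_mul (Real.sqrt (σ0 j))
    rw [mul_zero] at hb
    refine squeeze_zero_norm' (smallNoise_pos.mono fun p hp => ?_) hb
    rw [Pi.smul_apply, norm_smul, Real.norm_eq_abs, Real.norm_eq_abs, abs_of_pos (inv_pos.2 hp)]
    calc p.2⁻¹ * |p.1 j| ≤ p.2⁻¹ * (Real.sqrt (σ0 j) * enorm σ0 p.1) :=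
          mul_le_mul_of_nonneg_left (abs_le_enorm hσ0 p.1 j) (inv_pos.2 hp).le
      _ = _ := by ring
  have h2 : Tendsto (fun p : (Fin No → ℝ) × ℝ => p.2⁻¹ • p.2) (smallNoise σ0) (𝓝 1) := by
    refine tendsto_const_nhds.congr' (smallNoise_pos.mono fun p hp => ?_)
    exact (inv_mul_cancel₀ hp.ne').symm
  exact h1.prodMk_nhds h2

lemma exists_of_eventually_smallNoise {Q : (Fin No → ℝ) × ℝ → Prop}
    (h : ∀ᶠ p in smallNoise σ0, Q p) :
    ∃ δ > 0, ∀ p : (Fin No → ℝ) × ℝ, 0 < p.2 → enorm σ0 p.1 + p.2 < δ →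
      enorm σ0 p.1 / p.2 < δ → Q p := by
  rw [smallNoise, eventually_inf_principal, eventually_comap] at h
  obtain ⟨δ, hδ, hball⟩ := Metric.eventually_nhds_iff.1 h
  refine ⟨δ, hδ, fun p hp h1 h2 => hball ?_ p rfl hp⟩
  have h0 : 0 ≤ enorm σ0 p.1 := Real.sqrt_nonneg _
  rw [Prod.dist_eq, max_lt_iff, dist_zero_right, dist_zero_right, Real.norm_eq_abs,
    Real.norm_eq_abs, abs_of_nonneg (by positivity), abs_of_nonneg (by positivity)]
  exact ⟨h1, h2⟩

end SmallNoise

/-! ### The minimizer of the Tikhonov problem -/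

/-- **Uniqueness of the Tikhonov minimizer and its sparse parametrization.** Under the
non-degenerate source condition, for small-enough noise and regularization parameter the
Tikhonov problem has a unique minimizer, given by the sparse measure parametrized by the unique
stationary point `m̂` near `m†`. -/
theorem stmt_9 (d dO No Ns : ℕ) (hd : 1 ≤ d) (hNs : 0 < Ns)
    (Ωs : Set (EuclideanSpace ℝ (Fin d))) (hΩc : IsCompact Ωs)
    (hΩi : (interior Ωs).Nonempty)
    (Ωo : Set (EuclideanSpace ℝ (Fin dO))) (hΩo : IsCompact Ωo)
    (k : EuclideanSpace ℝ (Fin dO) → EuclideanSpace ℝ (Fin d) → ℝ)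
    (hk : ∀ x, ContDiff ℝ 3 (k x))
    (x : Fin No → EuclideanSpace ℝ (Fin dO)) (hx : ∀ j, x j ∈ Ωo)
    (σ0 : Fin No → ℝ) (hσ0 : ∀ j, 0 < σ0 j)
    (Ck Ck' Ck'' Ck''' : ℝ)
    (hCk : ∀ xx ∈ Ωo, ∀ yy ∈ Ωs, |k xx yy| ≤ Ck)
    (hCk1 : ∀ xx ∈ Ωo, ∀ yy ∈ Ωs, ‖fderiv ℝ (k xx) yy‖ ≤ Ck')
    (hCk2 : ∀ xx ∈ Ωo, ∀ yy ∈ Ωs, ‖iteratedFDeriv ℝ 2 (k xx) yy‖ ≤ Ck'')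
    (hCk3 : ∀ xx ∈ Ωo, ∀ yy ∈ Ωs, ‖iteratedFDeriv ℝ 3 (k xx) yy‖ ≤ Ck''')
    (qd : Fin Ns → ℝ) (hqd : ∀ n, qd n ≠ 0)
    (yd : Fin Ns → EuclideanSpace ℝ (Fin d)) (hyd : ∀ n, yd n ∈ interior Ωs)
    (hydinj : Function.Injective yd)
    (hrank : Function.Injective (Jmat k x qd yd).mulVec)
    (θ : ℝ) (hθ : θ ∈ Set.Ioc (0 : ℝ) 1)
    (ηd : EuclideanSpace ℝ (Fin d) → ℝ)
    (hηd : ηd = fun z => ∑ j, (σ0 j)⁻¹ *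
        ((Jmat k x qd yd) *ᵥ ((Fisher k x σ0 qd yd)⁻¹ *ᵥ rho0 d qd)) j * k (x j) z)
    (hadm : Admissible Ωs (fun n => |qd n|) θ qd yd ηd)
    (μd : SignedMeasure Ωs)
    (hμd : μd = sparseSub qd fun n => (⟨yd n, interior_subset (hyd n)⟩ : Ωs)) :
    ∃ C₁ > (0 : ℝ), ∃ C₂ > (0 : ℝ), ∃ rhat > (0 : ℝ),
      ∀ (ε : Fin No → ℝ) (β : ℝ), 0 < β →
        C₁ * (enorm σ0 ε + β) ≤ Real.sqrt (θ / 32) →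
        C₂ * β⁻¹ * ((enorm σ0 ε + β) ^ 2 + enorm σ0 ε) ≤ θ ^ 2 / 32 →
        ∃ mhat : (Fin Ns → ℝ) × (Fin Ns → EuclideanSpace ℝ (Fin d)),
          ((Wnorm qd (mhat - (qd, yd)) ≤ 3 / 2 * rhat ∧
              Smap k x σ0 (qd, yd) ε β mhat = 0) ∧
            ∀ m', Wnorm qd (m' - (qd, yd)) ≤ 3 / 2 * rhat →
              Smap k x σ0 (qd, yd) ε β m' = 0 → m' = mhat) ∧
          ∃ hmem : ∀ n, mhat.2 n ∈ Ωs,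
            (∀ ν : SignedMeasure Ωs,
                Jfun Ωs k x σ0 (fun j => Kop Ωs k x μd j + ε j) β
                    (sparseSub mhat.1 fun n => (⟨mhat.2 n, hmem n⟩ : Ωs)) ≤
                  Jfun Ωs k x σ0 (fun j => Kop Ωs k x μd j + ε j) β ν) ∧
            ∀ μ : SignedMeasure Ωs,
              (∀ ν : SignedMeasure Ωs,
                  Jfun Ωs k x σ0 (fun j => Kop Ωs k x μd j + ε j) β μ ≤
                    Jfun Ωs k x σ0 (fun j => Kop Ωs k x μd j + ε j) β ν) →
              μ = sparseSub mhat.1 fun n => (⟨mhat.2 n, hmem n⟩ : Ωs) := by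
  obtain ⟨φ, hφt, hφ0, hiff, hsol, hres⟩ := exists_solution_branch hk x hσ0 (qd, yd) hrank
  -- the radius makes the ball around `m†` lie in the uniqueness region of the branch
  rw [nhds_prod_eq] at hiff
  obtain ⟨PW, hPW, PU, hPU, hWU⟩ := eventually_prod_iff.1 hiff
  obtain ⟨rhat, hrpos, hrball⟩ := exists_Wnorm_ball_subset hqd (qd, yd) hPU
  set z₀ : Fin No → ℝ := fun j => (σ0 j)⁻¹ *
    (Jmat k x qd yd *ᵥ ((Fisher k x σ0 qd yd)⁻¹ *ᵥ rho0 d qd)) j with hz₀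
  set κ : Fin No → EuclideanSpace ℝ (Fin d) → ℝ := fun j => k (x j) with hκdef
  have hκ : ∀ j, ContDiff ℝ 2 (κ j) := fun j => (hk (x j)).of_le (by norm_num)
  have hηcert : ηd = cert κ z₀ := hηd
  rw [hηcert] at hadm
  set l := smallNoise σ0 with hl
  -- the rescaled residual, a candidate dual variable for the perturbed problem
  set zhat : (Fin No → ℝ) × ℝ → Fin No → ℝ := fun p j =>
    -(p.2⁻¹ * ((Gfun k x (φ p) j - Gfun k x (qd, yd) j - p.1 j) / σ0 j)) with hzhat
  have hl0 : Tendsto id l (𝓝 (0 : (Fin No → ℝ) × ℝ)) := tendsto_smallNoise hσ0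
  -- `zhat p` is minus a difference quotient of the residual at `0`, in directions
  -- tending to `(0, 1)`
  have hzt : Tendsto zhat l (𝓝 z₀) := by
    rw [tendsto_pi_nhds]
    intro j
    obtain ⟨H, hH, hHv⟩ := hres j
    have h1 := (hasFDerivWithinAt_univ.2 hH).lim (l := l) (c := fun p => p.2⁻¹) (d := id)
      (v := (0, 1)) hl0 (by simp) (tendsto_smallNoise_smul hσ0)
    rw [hHv] at h1
    have h2 := h1.neg
    rw [neg_neg] at h2
    refine h2.congr fun p => ?_
    simp [hzhat, hφ0]
  have hφl : Tendsto φ l (𝓝 (qd, yd)) := hφt.comp hl0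
  have hφq : ∀ n, Tendsto (fun p => (φ p).1 n) l (𝓝 (qd n)) := fun n =>
    (((continuous_apply n).comp continuous_fst).tendsto (qd, yd)).comp hφl
  have hφy : Tendsto (fun p => (φ p).2) l (𝓝 yd) :=
    (continuous_snd.tendsto (qd, yd)).comp hφl
  have hφyn : ∀ n, Tendsto (fun p => (φ p).2 n) l (𝓝 (yd n)) := fun n =>
    ((continuous_apply n).tendsto yd).comp hφy
  have ev_pos : ∀ᶠ p in l, 0 < p.2 := smallNoise_pos
  have ev_W : ∀ᶠ p in l, PW p := hl0.eventually hPW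
  have ev_sol : ∀ᶠ p in l, Smap k x σ0 (qd, yd) p.1 p.2 (φ p) = 0 := hl0.eventually hsol
  have ev_ball : ∀ᶠ p in l, Wnorm qd (φ p - (qd, yd)) ≤ 3 / 2 * rhat := by
    have hc : Continuous fun m : (Fin Ns → ℝ) × (Fin Ns → EuclideanSpace ℝ (Fin d)) =>
        Wnorm qd (m - (qd, yd)) := by
      unfold Wnorm WnormSq
      fun_prop
    have h0 : Wnorm qd (((qd, yd) : (Fin Ns → ℝ) × (Fin Ns → EuclideanSpace ℝ (Fin d))) -
        (qd, yd)) < 3 / 2 * rhat := by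
      have : 0 < 3 / 2 * rhat := by positivity
      simpa [Wnorm, WnormSq] using this
    exact (((hc.tendsto (qd, yd)).comp hφl).eventually_lt_const h0).mono fun _ h => h.le
  have ev_mem : ∀ᶠ p in l, ∀ n, (φ p).2 n ∈ Ωs :=
    eventually_all.2 fun n => hφyn n (mem_interior_iff_mem_nhds.1 (hyd n))
  have ev_inj : ∀ᶠ p in l, Function.Injective (φ p).2 := by
    have : ∀ᶠ p in l, ∀ i j, i ≠ j → (φ p).2 i ≠ (φ p).2 j := by
      refine eventually_all.2 fun i => eventually_all.2 fun j => ?_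
      by_cases hij : i = j
      · exact Eventually.of_forall fun _ h => absurd hij h
      · have h0 : yd i - yd j ≠ 0 := sub_ne_zero.2 fun h => hij (hydinj h)
        exact (((hφyn i).sub (hφyn j)).eventually_ne h0).mono fun _ h _ => sub_ne_zero.1 h
    filter_upwards [this] with p hp i j hij
    by_contra hne
    exact hp i j hne hij
  have ev_ind : ∀ᶠ p in l, LinearIndependent ℝ fun (n : Fin Ns) (j : Fin No) =>
      κ j ((φ p).2 n) := by
    have h0 : LinearIndependent ℝ fun (n : Fin Ns) (j : Fin No) => κ j (yd n) := by
      have := (Matrix.mulVec_injective_iff.1 hrank).comp Sum.inl Sum.inl_injective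
      exact this
    have ht : Tendsto (fun p (n : Fin Ns) (j : Fin No) => κ j ((φ p).2 n)) l
        (𝓝 fun n j => κ j (yd n)) := by
      rw [tendsto_pi_nhds]; intro n
      rw [tendsto_pi_nhds]; intro j
      exact ((hκ j).continuous.tendsto (yd n)).comp (hφyn n)
    exact ht.eventually (isOpen_setOfPred_linearIndependent.mem_nhds h0)
  have ev_sgn : ∀ᶠ p in l, ∀ n, 0 < (φ p).1 n * Real.sign (qd n) := by
    refine eventually_all.2 fun n => ((hφq n).mul_const _).eventually_const_lt ?_
    rcases lt_or_gt_of_ne (hqd n) with h | h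
    · rw [Real.sign_of_neg h]; linarith
    · rw [Real.sign_of_pos h]; linarith
  have ev_cert := (hzt.prodMk_nhds hφy).eventually
    (certificate_stable hNs hΩc hκ hqd hyd hydinj hθ.1 hadm)
  obtain ⟨δ, hδ, hall⟩ := exists_of_eventually_smallNoise (((((((((ev_pos.and ev_W).and
    ev_sol).and ev_ball).and ev_mem).and ev_inj).and ev_ind).and ev_sgn).and ev_cert))
  have hθ32 : 0 < Real.sqrt (θ / 32) := Real.sqrt_pos.2 (by linarith [hθ.1])
  have hθ2 : 0 < θ ^ 2 / 32 := by have := hθ.1; positivity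
  -- the constants turn the two smallness conditions into `‖ε‖ + β ≤ δ / 2` and
  -- `((‖ε‖ + β)² + ‖ε‖) / β ≤ δ / 2`
  refine ⟨Real.sqrt (θ / 32) * 2 / δ, by positivity, θ ^ 2 / 32 * 2 / δ, by positivity, rhat,
    hrpos, fun ε β hβ hC1 hC2 => ?_⟩
  have he0 : 0 ≤ enorm σ0 ε := Real.sqrt_nonneg _
  have hsm1 : enorm σ0 ε + β < δ := by
    have h1 : Real.sqrt (θ / 32) * (2 * (enorm σ0 ε + β) / δ) ≤ Real.sqrt (θ / 32) * 1 := by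
      rw [mul_one]
      refine le_of_eq_of_le ?_ hC1
      ring
    have h2 := le_of_mul_le_mul_left h1 hθ32
    rw [div_le_one hδ] at h2
    linarith
  have hsm2 : enorm σ0 ε / β < δ := by
    have h1 : θ ^ 2 / 32 * (2 * (((enorm σ0 ε + β) ^ 2 + enorm σ0 ε) / β) / δ) ≤
        θ ^ 2 / 32 * 1 := by
      rw [mul_one]
      refine le_of_eq_of_le ?_ hC2
      ring
    have h2 := le_of_mul_le_mul_left h1 hθ2
    rw [div_le_one hδ] at h2
    have h3 : enorm σ0 ε / β ≤ ((enorm σ0 ε + β) ^ 2 + enorm σ0 ε) / β :=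
      div_le_div_of_nonneg_right (by nlinarith [sq_nonneg (enorm σ0 ε + β)]) hβ.le
    have h4 : 0 ≤ enorm σ0 ε / β := by positivity
    linarith
  obtain ⟨⟨⟨⟨⟨⟨⟨⟨-, hPWp⟩, hS⟩, hball⟩, hmem⟩, hinj⟩, hind⟩, hsg⟩, hcert⟩ :=
    hall (ε, β) hβ hsm1 hsm2
  refine ⟨φ (ε, β), ⟨⟨hball, hS⟩, fun m' hm' hSm' => ?_⟩, hmem, ?_⟩
  · exact ((hWU hPWp (hrball m' hm')).1 hSm').symm
  set mh := φ (ε, β) with hmh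
  have hβz : ∀ j, β * zhat (ε, β) j =
      -((Gfun k x mh j - Gfun k x (qd, yd) j - ε j) / σ0 j) := fun j => by
    simp only [hzhat, ← hmh]
    field_simp
  have hqne : ∀ n, mh.1 n ≠ 0 := fun n h => by
    have := hsg n
    rw [h, zero_mul] at this
    exact lt_irrefl _ this
  -- the `q`-components of the stationarity equation say that the certificate interpolates the
  -- signs, the `y`-components that it is critical at the support points
  have hval : ∀ n, cert κ (zhat (ε, β)) (mh.2 n) = Real.sign (qd n) := by
    intro n
    have h1 := congrFun hS (Sum.inl n)
    rw [Smap_apply] at h1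
    refine mul_left_cancel₀ hβ.ne' ?_
    rw [cert, Finset.mul_sum]
    simp only [← mul_assoc, hβz]
    simp only [Jmat, Matrix.of_apply, Sum.elim_inl, rho0, Pi.zero_apply] at h1
    have h2 : ∑ j, -((Gfun k x mh j - Gfun k x (qd, yd) j - ε j) / σ0 j) * κ j (mh.2 n) =
        -∑ j, k (x j) (mh.2 n) * ((Gfun k x mh j - Gfun k x (qd, yd) j - ε j) / σ0 j) := by
      rw [← Finset.sum_neg_distrib]
      exact Finset.sum_congr rfl fun j _ => by ring
    rw [h2]
    linarith
  have hcrit : ∀ n, fderiv ℝ (cert κ (zhat (ε, β))) (mh.2 n) = 0 := by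
    intro n
    have hi : ∀ i, fderiv ℝ (cert κ (zhat (ε, β))) (mh.2 n) (EuclideanSpace.single i 1) = 0 := by
      intro i
      have h1 := congrFun hS (Sum.inr (n, i))
      rw [Smap_apply] at h1
      simp only [Jmat, Matrix.of_apply, Sum.elim_inr, rho0, Pi.zero_apply, mul_zero,
        add_zero] at h1
      refine mul_left_cancel₀ (mul_ne_zero hβ.ne' (hqne n)) ?_
      rw [fderiv_cert hκ, mul_zero, ← neg_eq_zero.2 h1, ← Finset.sum_neg_distrib]
      simp only [FunLike.coe_sum, Finset.sum_apply, FunLike.coe_smul, Pi.smul_apply, smul_eq_mul]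
      rw [Finset.mul_sum]
      refine Finset.sum_congr rfl fun j _ => ?_
      have h3 := hβz j
      calc _ = mh.1 n * fderiv ℝ (κ j) (mh.2 n) (EuclideanSpace.single i 1) *
            (β * zhat (ε, β) j) := by ring
        _ = _ := by rw [h3]; ring
    refine ContinuousLinearMap.ext fun v => ?_
    conv_lhs => rw [← (EuclideanSpace.basisFun (Fin d) ℝ).sum_repr v]
    simp [hi]
  have hlt := hcert hval hcrit
  have hinj' : Function.Injective fun n => (⟨mh.2 n, hmem n⟩ : Ωs) := fun i j hij =>
    hinj (congrArg Subtype.val hij)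
  have hinjd : Function.Injective fun n => (⟨yd n, interior_subset (hyd n)⟩ : Ωs) := fun i j hij =>
    hydinj (congrArg Subtype.val hij)
  have hKd : ∀ j, Kop Ωs k x μd j = Gfun k x (qd, yd) j := fun j => by
    rw [hμd, Kop, sInt_sparseSub _ _ hinjd, Gfun]
  have : CompactSpace Ωs := isCompact_iff_compactSpace.1 hΩc
  have key := unique_min_of_certificate (X := Ωs) (fun j y => κ j y)
    (fun j => (hκ j).continuous.comp continuous_subtype_val) σ0
    (fun j => Kop Ωs k x μd j + ε j) hσ0 β hβ mh.1 (fun n => ⟨mh.2 n, hmem n⟩) hinj'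
    (zhat (ε, β)) (fun j => by
      rw [hβz, hKd, ← sub_sub]
      rfl)
    (fun n => by
      have h1 : ∑ j, zhat (ε, β) j * κ j (mh.2 n) = Real.sign (qd n) := hval n
      rw [h1, ← abs_of_pos (hsg n), abs_mul]
      have : |Real.sign (qd n)| = 1 := by
        rw [← sq_eq_sq₀ (abs_nonneg _) zero_le_one, sq_abs, sign_sq (hqd n), one_pow]
      rw [this, mul_one])
    (fun n => by
      have h1 : ∑ j, zhat (ε, β) j * κ j (mh.2 n) = Real.sign (qd n) := hval n
      rw [h1, ← sq_le_one_iff_abs_le_one, sign_sq (hqd n)])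
    (fun y hy => hlt y y.2 fun n h => hy n (Subtype.ext h)) hind
  exact ⟨fun ν => (key ν).1, fun μ hμ => (key μ).2 (hμ _)⟩
end
end

section
/- Assume Σ₀ is a positive definite diagonal N_o × N_o matrix with tr(Σ₀^{-1}) = 1 and k(x, ·) is twice continuously differentiable in y with finite bounds C_k, C'_k, C''_k. Define r† := min over n of min{ √|q_n†| / 8, √|q_n†| · dist(y_n†, ∂Ω_s) / 2 }, L_G := 4(2C_k + C'_k)√(‖q†‖₁) and L_{G'} := 2(4C'_k + C''_k). Then for all m, m' in the closed ball B := {m : ‖m − m†‖_{W†} ≤ r†} and all δm ∈ ℝ^{(1+d)N_s}: (i) ‖Σ₀^{-1/2}(G(m) − G(m'))‖₂ ≤ L_G ‖m − m'‖_{W†}; (ii) ‖Σ₀^{-1/2} G'(m) δm‖₂ ≤ L_G ‖δm‖_{W†}; (iii) ‖Σ₀^{-1/2}(G'(m) − G'(m')) δm‖₂ ≤ L_{G'} ‖m − m'‖_{W†} ‖δm‖_{W†}. -/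
/-!
On the ball around `m† = (q†, y†)`, the two terms of `r†` give the componentwise bounds
`|q_n - q†_n| ≤ |q†_n| / 4`, hence `|q_n| ≤ 2 |q†_n|`, and
`‖y_n - y†_n‖ ≤ dist(y†_n, ∂Ω_s) / 2`. The second one places `y_n` in a closed ball contained in
`Ω_s` (a connected set which meets `Ω_s` and misses its frontier). This ball is convex, so the mean
value inequality turns the derivative bounds on `Ω_s` into Lipschitz bounds for `k(x, ·)` and
`∇_y k(x, ·)` between the points `y_n` and `y'_n`.

With these, each of the three quantities is bounded, in every component `j`, by sums of products
such as `∑ |δq_n|`, `∑ |q†_n| ‖δy_n‖`, `∑ |δq_n| ‖η_n‖` and `∑ |q†_n| ‖η_n‖ ‖δy_n‖`. Cauchy–Schwarz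
with weights `|q†_n|` bounds these by `W†`-norms. Since `∑ 1/σ_j = 1`, a bound uniform in `j`
passes to the `Σ₀^{-1/2}`-weighted Euclidean norm.
-/

noncomputable section

/-- The weights `1/σ_j` sum to one, so a uniform bound on the components bounds the weighted
Euclidean norm. -/
lemma sqrt_sum_sq_div_le {No : ℕ} (σ0 a : Fin No → ℝ) (hσ0 : ∀ j, 0 < σ0 j)
    (htr : ∑ j, (σ0 j)⁻¹ = 1) (B : ℝ) (h : ∀ j, |a j| ≤ B) (hB : 0 ≤ B) :
    Real.sqrt (∑ j, (a j) ^ 2 / σ0 j) ≤ B := by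
  apply Real.sqrt_le_iff.mpr ⟨hB, ?_⟩
  calc ∑ j, (a j) ^ 2 / σ0 j ≤ ∑ j, B ^ 2 * (σ0 j)⁻¹ := by
        apply Finset.sum_le_sum
        intro j _
        rw [div_eq_mul_inv]
        have h1 : (a j) ^ 2 ≤ B ^ 2 := sq_le_sq' (abs_le.mp (h j)).1 (abs_le.mp (h j)).2
        exact mul_le_mul_of_nonneg_right h1 (inv_nonneg.mpr (hσ0 j).le)
    _ = B ^ 2 := by rw [← Finset.mul_sum, htr, mul_one]

section Wnorm

variable {d Ns : ℕ} (qd : Fin Ns → ℝ) (δ η : (Fin Ns → ℝ) × (Fin Ns → EuclideanSpace ℝ (Fin d)))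

lemma Wnorm_nonneg : 0 ≤ Wnorm qd δ := Real.sqrt_nonneg _

lemma sqrt_sum_q_le_Wnorm :
    Real.sqrt (∑ n, (|δ.1 n| / (2 * Real.sqrt |qd n|)) ^ 2) ≤ Wnorm qd δ := by
  apply Real.sqrt_le_sqrt
  have h : ∑ n, (|δ.1 n| / (2 * Real.sqrt |qd n|)) ^ 2 = ∑ n, (δ.1 n) ^ 2 / (4 * |qd n|) := by
    refine Finset.sum_congr rfl fun n _ => ?_
    rw [div_pow, mul_pow, Real.sq_sqrt (abs_nonneg _), sq_abs]
    norm_num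
  rw [h, WnormSq]
  have : 0 ≤ ∑ n, |qd n| * ‖δ.2 n‖ ^ 2 := Finset.sum_nonneg fun n _ => by positivity
  linarith

lemma sqrt_sum_y_le_Wnorm : Real.sqrt (∑ n, (Real.sqrt |qd n| * ‖δ.2 n‖) ^ 2) ≤ Wnorm qd δ := by
  apply Real.sqrt_le_sqrt
  have h : ∑ n, (Real.sqrt |qd n| * ‖δ.2 n‖) ^ 2 = ∑ n, |qd n| * ‖δ.2 n‖ ^ 2 := by
    refine Finset.sum_congr rfl fun n _ => ?_
    rw [mul_pow, Real.sq_sqrt (abs_nonneg _)]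
  rw [h, WnormSq]
  have : 0 ≤ ∑ n, (δ.1 n) ^ 2 / (4 * |qd n|) := Finset.sum_nonneg fun n _ => by positivity
  linarith

lemma comp_q_le_Wnorm (n : Fin Ns) : |δ.1 n| / (2 * Real.sqrt |qd n|) ≤ Wnorm qd δ := by
  refine le_trans (Real.le_sqrt_of_sq_le ?_) (sqrt_sum_q_le_Wnorm qd δ)
  exact Finset.single_le_sum (f := fun n => (|δ.1 n| / (2 * Real.sqrt |qd n|)) ^ 2)
    (fun i _ => sq_nonneg _) (Finset.mem_univ n)

lemma comp_y_le_Wnorm (n : Fin Ns) : Real.sqrt |qd n| * ‖δ.2 n‖ ≤ Wnorm qd δ := by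
  refine le_trans (Real.le_sqrt_of_sq_le ?_) (sqrt_sum_y_le_Wnorm qd δ)
  exact Finset.single_le_sum (f := fun n => (Real.sqrt |qd n| * ‖δ.2 n‖) ^ 2)
    (fun i _ => sq_nonneg _) (Finset.mem_univ n)

lemma sum_abs_q_le (hqd : ∀ n, qd n ≠ 0) :
    ∑ n, |δ.1 n| ≤ 2 * Real.sqrt (∑ n, |qd n|) * Wnorm qd δ := by
  have h := Real.sum_mul_le_sqrt_mul_sqrt Finset.univ
    (fun n => Real.sqrt |qd n|) (fun n => |δ.1 n| / (2 * Real.sqrt |qd n|))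
  have e1 : ∑ n, Real.sqrt |qd n| * (|δ.1 n| / (2 * Real.sqrt |qd n|)) = (∑ n, |δ.1 n|) / 2 := by
    rw [Finset.sum_div]
    refine Finset.sum_congr rfl fun n _ => ?_
    have : 0 < Real.sqrt |qd n| := Real.sqrt_pos.mpr (abs_pos.mpr (hqd n))
    field_simp
  have e2 : ∑ n, Real.sqrt |qd n| ^ 2 = ∑ n, |qd n| :=
    Finset.sum_congr rfl fun n _ => Real.sq_sqrt (abs_nonneg _)
  rw [e1, e2] at h
  have := mul_le_mul_of_nonneg_left (sqrt_sum_q_le_Wnorm qd δ) (Real.sqrt_nonneg (∑ n, |qd n|))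
  linarith

lemma sum_abs_qd_mul_norm_y_le :
    ∑ n, |qd n| * ‖δ.2 n‖ ≤ Real.sqrt (∑ n, |qd n|) * Wnorm qd δ := by
  have h := Real.sum_mul_le_sqrt_mul_sqrt Finset.univ
    (fun n => Real.sqrt |qd n|) (fun n => Real.sqrt |qd n| * ‖δ.2 n‖)
  have e1 : ∑ n, Real.sqrt |qd n| * (Real.sqrt |qd n| * ‖δ.2 n‖) = ∑ n, |qd n| * ‖δ.2 n‖ := by
    refine Finset.sum_congr rfl fun n _ => ?_
    rw [← mul_assoc, Real.mul_self_sqrt (abs_nonneg _)]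
  have e2 : ∑ n, Real.sqrt |qd n| ^ 2 = ∑ n, |qd n| :=
    Finset.sum_congr rfl fun n _ => Real.sq_sqrt (abs_nonneg _)
  rw [e1, e2] at h
  exact h.trans (mul_le_mul_of_nonneg_left (sqrt_sum_y_le_Wnorm qd δ) (Real.sqrt_nonneg _))

lemma sum_abs_q_mul_norm_y_le (hqd : ∀ n, qd n ≠ 0) :
    ∑ n, |δ.1 n| * ‖η.2 n‖ ≤ 2 * (Wnorm qd δ * Wnorm qd η) := by
  have h := Real.sum_mul_le_sqrt_mul_sqrt Finset.univ
    (fun n => |δ.1 n| / (2 * Real.sqrt |qd n|)) (fun n => Real.sqrt |qd n| * ‖η.2 n‖)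
  have e1 : ∑ n, |δ.1 n| / (2 * Real.sqrt |qd n|) * (Real.sqrt |qd n| * ‖η.2 n‖)
      = (∑ n, |δ.1 n| * ‖η.2 n‖) / 2 := by
    rw [Finset.sum_div]
    refine Finset.sum_congr rfl fun n _ => ?_
    have : 0 < Real.sqrt |qd n| := Real.sqrt_pos.mpr (abs_pos.mpr (hqd n))
    field_simp
  rw [e1] at h
  have := mul_le_mul (sqrt_sum_q_le_Wnorm qd δ) (sqrt_sum_y_le_Wnorm qd η) (Real.sqrt_nonneg _)
    (Wnorm_nonneg qd δ)
  linarith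

lemma sum_abs_qd_mul_norm_y_mul_norm_y_le :
    ∑ n, |qd n| * (‖δ.2 n‖ * ‖η.2 n‖) ≤ Wnorm qd δ * Wnorm qd η := by
  have h := Real.sum_mul_le_sqrt_mul_sqrt Finset.univ
    (fun n => Real.sqrt |qd n| * ‖δ.2 n‖) (fun n => Real.sqrt |qd n| * ‖η.2 n‖)
  have e1 : ∑ n, Real.sqrt |qd n| * ‖δ.2 n‖ * (Real.sqrt |qd n| * ‖η.2 n‖)
      = ∑ n, |qd n| * (‖δ.2 n‖ * ‖η.2 n‖) := by
    refine Finset.sum_congr rfl fun n _ => ?_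
    rw [mul_mul_mul_comm, Real.mul_self_sqrt (abs_nonneg _)]
  rw [e1] at h
  exact h.trans (mul_le_mul (sqrt_sum_y_le_Wnorm qd δ) (sqrt_sum_y_le_Wnorm qd η)
    (Real.sqrt_nonneg _) (Wnorm_nonneg qd δ))

/-- The first term of the radius controls the amplitudes; the resulting factor is `5/4 ≤ 2`. -/
lemma abs_q_le_of_Wnorm_le (hqd : ∀ n, qd n ≠ 0)
    (m : (Fin Ns → ℝ) × (Fin Ns → EuclideanSpace ℝ (Fin d)))
    (yd : Fin Ns → EuclideanSpace ℝ (Fin d)) (n : Fin Ns)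
    (h : Wnorm qd (m - (qd, yd)) ≤ Real.sqrt |qd n| / 8) : |m.1 n| ≤ 2 * |qd n| := by
  have h1 := (comp_q_le_Wnorm qd (m - (qd, yd)) n).trans h
  have hs : 0 < Real.sqrt |qd n| := Real.sqrt_pos.mpr (abs_pos.mpr (hqd n))
  rw [div_le_iff₀ (by positivity)] at h1
  have h2 : Real.sqrt |qd n| * Real.sqrt |qd n| = |qd n| := Real.mul_self_sqrt (abs_nonneg _)
  have h3 : |m.1 n - qd n| ≤ |qd n| / 4 := by
    have : (m - (qd, yd)).1 n = m.1 n - qd n := rfl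
    rw [this] at h1
    linarith
  have h4 : |m.1 n| ≤ |m.1 n - qd n| + |qd n| := by
    simpa using abs_add_le (m.1 n - qd n) (qd n)
  have := abs_nonneg (qd n)
  linarith

lemma y_mem_closedBall_of_Wnorm_le (hqd : ∀ n, qd n ≠ 0)
    (m : (Fin Ns → ℝ) × (Fin Ns → EuclideanSpace ℝ (Fin d)))
    (yd : Fin Ns → EuclideanSpace ℝ (Fin d)) (n : Fin Ns) (R : ℝ)
    (h : Wnorm qd (m - (qd, yd)) ≤ Real.sqrt |qd n| * R / 2) :
    m.2 n ∈ Metric.closedBall (yd n) (R / 2) := by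
  have h1 := (comp_y_le_Wnorm qd (m - (qd, yd)) n).trans h
  have hs : 0 < Real.sqrt |qd n| := Real.sqrt_pos.mpr (abs_pos.mpr (hqd n))
  rw [Metric.mem_closedBall, dist_eq_norm]
  have : (m - (qd, yd)).2 n = m.2 n - yd n := rfl
  rw [this, mul_div_assoc] at h1
  exact le_of_mul_le_mul_left h1 hs

end Wnorm

/-- A ball around a point of `Ω` of half the distance to the frontier stays in `Ω`. An empty
frontier causes no harm: `Metric.infDist` is then zero and the ball is a point. -/
lemma closedBall_half_infDist_frontier_subset {d : ℕ} (Ω : Set (EuclideanSpace ℝ (Fin d)))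
    (y : EuclideanSpace ℝ (Fin d)) (hy : y ∈ Ω) :
    Metric.closedBall y (Metric.infDist y (frontier Ω) / 2) ⊆ Ω := by
  set R := Metric.infDist y (frontier Ω) with hR
  have hR0 : 0 ≤ R := Metric.infDist_nonneg
  rcases hR0.eq_or_lt with h0 | h0
  · rw [← h0]
    simpa using hy
  · by_contra hsub
    obtain ⟨z, hz, hzΩ⟩ := Set.not_subset.mp hsub
    have hconn : IsPreconnected (Metric.closedBall y (R / 2)) :=
      (convex_closedBall y (R / 2)).isPreconnected
    have hfr : ∀ w ∈ Metric.closedBall y (R / 2), w ∉ frontier Ω := fun w hw hwf => by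
      have h1 : R ≤ dist y w := Metric.infDist_le_dist_of_mem hwf
      rw [Metric.mem_closedBall, dist_comm] at hw
      linarith
    have hyB : y ∈ Metric.closedBall y (R / 2) := Metric.mem_closedBall_self (by linarith)
    -- Off the frontier, the space splits into the open sets `interior Ω` and `(closure Ω)ᶜ`.
    obtain ⟨w, -, hw1, hw2⟩ := hconn (interior Ω) (closure Ω)ᶜ isOpen_interior
      isClosed_closure.isOpen_compl
      (fun w hw => by
        by_contra h
        rw [Set.mem_union, not_or, Set.mem_compl_iff, not_not] at h
        exact hfr w hw ⟨h.2, h.1⟩)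
      ⟨y, hyB, by
        by_contra h
        exact hfr y hyB ⟨subset_closure hy, h⟩⟩
      ⟨z, hz, fun h => hfr z hz ⟨h, fun h' => hzΩ (interior_subset h')⟩⟩
    exact hw2 (subset_closure (interior_subset hw1))

lemma norm_fderiv_fderiv_eq {d : ℕ} (f : EuclideanSpace ℝ (Fin d) → ℝ)
    (y : EuclideanSpace ℝ (Fin d)) :
    ‖fderiv ℝ (fderiv ℝ f) y‖ = ‖iteratedFDeriv ℝ 2 f y‖ := by
  rw [← norm_iteratedFDeriv_one, norm_iteratedFDeriv_fderiv]

/-- The product rule, summed over `n`: `G'(q; y)(δq; δy)_j = ∑ δq_n k + q_n ⟨∇_y k, δy_n⟩`. -/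
lemma fderiv_Gfun_apply {d dO No Ns : ℕ}
    (k : EuclideanSpace ℝ (Fin dO) → EuclideanSpace ℝ (Fin d) → ℝ)
    (hk : ∀ x, ContDiff ℝ 2 (k x)) (x : Fin No → EuclideanSpace ℝ (Fin dO))
    (m δm : (Fin Ns → ℝ) × (Fin Ns → EuclideanSpace ℝ (Fin d))) (j : Fin No) :
    fderiv ℝ (Gfun k x) m δm j =
      ∑ n, (δm.1 n * k (x j) (m.2 n) + m.1 n * fderiv ℝ (k (x j)) (m.2 n) (δm.2 n)) := by
  have hq : ∀ n, HasFDerivAt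
      (fun m : (Fin Ns → ℝ) × (Fin Ns → EuclideanSpace ℝ (Fin d)) => m.1 n)
      ((ContinuousLinearMap.proj n).comp (ContinuousLinearMap.fst ℝ _ _)) m := fun n =>
    ((ContinuousLinearMap.proj (R := ℝ) (φ := fun _ : Fin Ns => ℝ) n).comp
      (ContinuousLinearMap.fst ℝ _ (Fin Ns → EuclideanSpace ℝ (Fin d)))).hasFDerivAt
  have hy : ∀ n, HasFDerivAt
      (fun m : (Fin Ns → ℝ) × (Fin Ns → EuclideanSpace ℝ (Fin d)) => m.2 n)
      ((ContinuousLinearMap.proj n).comp (ContinuousLinearMap.snd ℝ _ _)) m := fun n =>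
    ((ContinuousLinearMap.proj (R := ℝ) (φ := fun _ : Fin Ns => EuclideanSpace ℝ (Fin d)) n).comp
      (ContinuousLinearMap.snd ℝ (Fin Ns → ℝ) _)).hasFDerivAt
  have hkd : ∀ (i : Fin No) (y : EuclideanSpace ℝ (Fin d)),
      HasFDerivAt (k (x i)) (fderiv ℝ (k (x i)) y) y := fun i y =>
    (((hk (x i)).differentiable (by norm_num)) y).hasFDerivAt
  have hG : HasFDerivAt (Gfun k x) (ContinuousLinearMap.pi fun i => ∑ n,
      (m.1 n • ((fderiv ℝ (k (x i)) (m.2 n)).comp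
        ((ContinuousLinearMap.proj n).comp (ContinuousLinearMap.snd ℝ _ _)))
      + k (x i) (m.2 n) • ((ContinuousLinearMap.proj n).comp
        (ContinuousLinearMap.fst ℝ (Fin Ns → ℝ) (Fin Ns → EuclideanSpace ℝ (Fin d)))))) m := by
    rw [hasFDerivAt_pi]
    intro i
    exact HasFDerivAt.fun_sum fun n _ =>
      (hq n).mul ((hkd i (m.2 n)).comp m (hy n))
  rw [hG.fderiv]
  simp only [ContinuousLinearMap.pi_apply, _root_.sum_apply]
  refine Finset.sum_congr rfl fun n _ => ?_
  simp
  ring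

/-- **Lipschitz estimates for `G` and `G'` on the ball `B_{W†}(m†, r†)`:** with
`L_G = 4(2C_k + C'_k)√‖q†‖₁` and `L_{G'} = 2(4C'_k + C''_k)`, the map `G` is `L_G`-Lipschitz in
the `Σ₀^{-1/2}`-weighted Euclidean norm, `G'` is bounded by `L_G`, and `G'` is
`L_{G'}`-Lipschitz, all with respect to the `W†`-norm. -/
theorem stmt_17 (d dO No Ns : ℕ) (hd : 1 ≤ d) (hNs : 0 < Ns)
    (Ωs : Set (EuclideanSpace ℝ (Fin d))) (hΩc : IsCompact Ωs)
    (hΩi : (interior Ωs).Nonempty)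
    (Ωo : Set (EuclideanSpace ℝ (Fin dO))) (hΩo : IsCompact Ωo)
    (k : EuclideanSpace ℝ (Fin dO) → EuclideanSpace ℝ (Fin d) → ℝ)
    (hk : ∀ x, ContDiff ℝ 2 (k x))
    (x : Fin No → EuclideanSpace ℝ (Fin dO)) (hx : ∀ j, x j ∈ Ωo)
    (σ0 : Fin No → ℝ) (hσ0 : ∀ j, 0 < σ0 j) (htr : ∑ j, (σ0 j)⁻¹ = 1)
    (Ck Ck' Ck'' : ℝ)
    (hCk : ∀ xx ∈ Ωo, ∀ yy ∈ Ωs, |k xx yy| ≤ Ck)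
    (hCk1 : ∀ xx ∈ Ωo, ∀ yy ∈ Ωs, ‖fderiv ℝ (k xx) yy‖ ≤ Ck')
    (hCk2 : ∀ xx ∈ Ωo, ∀ yy ∈ Ωs, ‖iteratedFDeriv ℝ 2 (k xx) yy‖ ≤ Ck'')
    (qd : Fin Ns → ℝ) (hqd : ∀ n, qd n ≠ 0)
    (yd : Fin Ns → EuclideanSpace ℝ (Fin d)) (hyd : ∀ n, yd n ∈ interior Ωs)
    (hydinj : Function.Injective yd)
    (rdag LG LG' : ℝ)
    (hr : rdag = ⨅ n, min (Real.sqrt |qd n| / 8)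
        (Real.sqrt |qd n| * Metric.infDist (yd n) (frontier Ωs) / 2))
    (hLG : LG = 4 * (2 * Ck + Ck') * Real.sqrt (∑ n, |qd n|))
    (hLG' : LG' = 2 * (4 * Ck' + Ck''))
    (m m' : (Fin Ns → ℝ) × (Fin Ns → EuclideanSpace ℝ (Fin d)))
    (hm : Wnorm qd (m - (qd, yd)) ≤ rdag) (hm' : Wnorm qd (m' - (qd, yd)) ≤ rdag)
    (δm : (Fin Ns → ℝ) × (Fin Ns → EuclideanSpace ℝ (Fin d))) :
    Real.sqrt (∑ j, (Gfun k x m j - Gfun k x m' j) ^ 2 / σ0 j) ≤ LG * Wnorm qd (m - m') ∧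
    Real.sqrt (∑ j, (fderiv ℝ (Gfun k x) m δm j) ^ 2 / σ0 j) ≤ LG * Wnorm qd δm ∧
    Real.sqrt (∑ j, (fderiv ℝ (Gfun k x) m δm j - fderiv ℝ (Gfun k x) m' δm j) ^ 2 / σ0 j) ≤
      LG' * Wnorm qd (m - m') * Wnorm qd δm := by
  have hNo : Nonempty (Fin No) := by
    by_contra h
    rw [not_nonempty_iff] at h
    simp at htr
  obtain ⟨j0⟩ := hNo
  have hydΩ : ∀ n, yd n ∈ Ωs := fun n => interior_subset (hyd n)
  have hCk_nonneg : 0 ≤ Ck := (abs_nonneg _).trans (hCk _ (hx j0) _ (hydΩ ⟨0, hNs⟩))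
  have hCk1_nonneg : 0 ≤ Ck' := (norm_nonneg _).trans (hCk1 _ (hx j0) _ (hydΩ ⟨0, hNs⟩))
  have hCk2_nonneg : 0 ≤ Ck'' := (norm_nonneg _).trans (hCk2 _ (hx j0) _ (hydΩ ⟨0, hNs⟩))
  have hrle : ∀ n, rdag ≤ min (Real.sqrt |qd n| / 8)
      (Real.sqrt |qd n| * Metric.infDist (yd n) (frontier Ωs) / 2) := fun n => by
    rw [hr]
    exact ciInf_le (Set.finite_range _).bddBelow n
  have hq : ∀ n, |m.1 n| ≤ 2 * |qd n| := fun n =>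
    abs_q_le_of_Wnorm_le qd hqd m yd n (hm.trans ((hrle n).trans (min_le_left _ _)))
  have hq' : ∀ n, |m'.1 n| ≤ 2 * |qd n| := fun n =>
    abs_q_le_of_Wnorm_le qd hqd m' yd n (hm'.trans ((hrle n).trans (min_le_left _ _)))
  set K : Fin Ns → Set (EuclideanSpace ℝ (Fin d)) := fun n =>
    Metric.closedBall (yd n) (Metric.infDist (yd n) (frontier Ωs) / 2) with hK
  have hKΩ : ∀ n, K n ⊆ Ωs := fun n =>
    closedBall_half_infDist_frontier_subset Ωs (yd n) (hydΩ n)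
  have hKc : ∀ n, Convex ℝ (K n) := fun n => convex_closedBall _ _
  have hy : ∀ n, m.2 n ∈ K n := fun n =>
    y_mem_closedBall_of_Wnorm_le qd hqd m yd n _ (hm.trans ((hrle n).trans (min_le_right _ _)))
  have hy' : ∀ n, m'.2 n ∈ K n := fun n =>
    y_mem_closedBall_of_Wnorm_le qd hqd m' yd n _ (hm'.trans ((hrle n).trans (min_le_right _ _)))
  have hLip : ∀ j n, |k (x j) (m.2 n) - k (x j) (m'.2 n)| ≤ Ck' * ‖(m - m').2 n‖ := fun j n =>
    (hKc n).norm_image_sub_le_of_norm_fderiv_le (𝕜 := ℝ)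
      (fun y _ => (hk (x j)).differentiable (by norm_num) y)
      (fun y hyK => hCk1 _ (hx j) y (hKΩ n hyK)) (hy' n) (hy n)
  have hLip' : ∀ j n, ‖fderiv ℝ (k (x j)) (m.2 n) - fderiv ℝ (k (x j)) (m'.2 n)‖
      ≤ Ck'' * ‖(m - m').2 n‖ := fun j n =>
    (hKc n).norm_image_sub_le_of_norm_fderiv_le (𝕜 := ℝ)
      (fun y _ => ((hk (x j)).fderiv_right (m := 1) (by norm_num)).differentiable (by norm_num) y)
      (fun y hyK => (norm_fderiv_fderiv_eq _ y).le.trans (hCk2 _ (hx j) y (hKΩ n hyK)))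
      (hy' n) (hy n)
  -- The increments of `G` and the action of its Jacobian share this componentwise majorant.
  have hmaj : ∀ δ : (Fin Ns → ℝ) × (Fin Ns → EuclideanSpace ℝ (Fin d)),
      ∑ n, (Ck * |δ.1 n| + 2 * Ck' * (|qd n| * ‖δ.2 n‖)) ≤ LG * Wnorm qd δ := fun δ => by
    rw [Finset.sum_add_distrib, ← Finset.mul_sum, ← Finset.mul_sum, hLG]
    have h1 := mul_le_mul_of_nonneg_left (sum_abs_q_le qd δ hqd) hCk_nonneg
    have h2 := mul_le_mul_of_nonneg_left (sum_abs_qd_mul_norm_y_le qd δ)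
      (by positivity : 0 ≤ 2 * Ck')
    have h3 : 0 ≤ Real.sqrt (∑ n, |qd n|) * Wnorm qd δ :=
      mul_nonneg (Real.sqrt_nonneg _) (Wnorm_nonneg qd δ)
    have h4 := mul_nonneg hCk_nonneg h3
    have h5 := mul_nonneg hCk1_nonneg h3
    linarith
  have hLG0 : 0 ≤ LG := by rw [hLG]; positivity
  have hLG0' : 0 ≤ LG' := by rw [hLG']; positivity
  refine ⟨?_, ?_, ?_⟩
  · refine sqrt_sum_sq_div_le σ0 _ hσ0 htr _ (fun j => ?_) (mul_nonneg hLG0 (Wnorm_nonneg _ _))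
    refine le_trans ?_ (hmaj (m - m'))
    rw [Gfun, Gfun, ← Finset.sum_sub_distrib]
    refine (Finset.abs_sum_le_sum_abs _ _).trans (Finset.sum_le_sum fun n _ => ?_)
    have e : m.1 n * k (x j) (m.2 n) - m'.1 n * k (x j) (m'.2 n)
        = k (x j) (m.2 n) * (m - m').1 n
          + m'.1 n * (k (x j) (m.2 n) - k (x j) (m'.2 n)) := by
      have : (m - m').1 n = m.1 n - m'.1 n := rfl
      rw [this]
      ring
    rw [e]
    refine (abs_add_le _ _).trans (add_le_add ?_ ?_)
    · rw [abs_mul]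
      exact mul_le_mul_of_nonneg_right (hCk _ (hx j) _ (hKΩ n (hy n))) (abs_nonneg _)
    · rw [abs_mul]
      refine (mul_le_mul (hq' n) (hLip j n) (abs_nonneg _) (by positivity)).trans_eq ?_
      ring
  · refine sqrt_sum_sq_div_le σ0 _ hσ0 htr _ (fun j => ?_) (mul_nonneg hLG0 (Wnorm_nonneg _ _))
    refine le_trans ?_ (hmaj δm)
    rw [fderiv_Gfun_apply k hk]
    refine (Finset.abs_sum_le_sum_abs _ _).trans (Finset.sum_le_sum fun n _ => ?_)
    refine (abs_add_le _ _).trans (add_le_add ?_ ?_)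
    · rw [abs_mul, mul_comm]
      exact mul_le_mul_of_nonneg_right (hCk _ (hx j) _ (hKΩ n (hy n))) (abs_nonneg _)
    · rw [abs_mul]
      have h1 : |fderiv ℝ (k (x j)) (m.2 n) (δm.2 n)| ≤ Ck' * ‖δm.2 n‖ :=
        ContinuousLinearMap.le_of_opNorm_le _ (hCk1 _ (hx j) _ (hKΩ n (hy n))) _
      refine (mul_le_mul (hq n) h1 (abs_nonneg _) (by positivity)).trans_eq ?_
      ring
  · refine sqrt_sum_sq_div_le σ0 _ hσ0 htr _ (fun j => ?_)
      (mul_nonneg (mul_nonneg hLG0' (Wnorm_nonneg _ _)) (Wnorm_nonneg _ _))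
    have hmaj2 : ∑ n, (Ck' * (|δm.1 n| * ‖(m - m').2 n‖) + Ck' * (|(m - m').1 n| * ‖δm.2 n‖)
        + 2 * Ck'' * (|qd n| * (‖(m - m').2 n‖ * ‖δm.2 n‖)))
        ≤ LG' * Wnorm qd (m - m') * Wnorm qd δm := by
      rw [Finset.sum_add_distrib, Finset.sum_add_distrib, ← Finset.mul_sum, ← Finset.mul_sum,
        ← Finset.mul_sum, hLG']
      have h1 := mul_le_mul_of_nonneg_left
        (sum_abs_q_mul_norm_y_le qd δm (m - m') hqd) hCk1_nonneg
      have h2 := mul_le_mul_of_nonneg_left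
        (sum_abs_q_mul_norm_y_le qd (m - m') δm hqd) hCk1_nonneg
      have h3 := mul_le_mul_of_nonneg_left
        (sum_abs_qd_mul_norm_y_mul_norm_y_le qd (m - m') δm) (by positivity : 0 ≤ 2 * Ck'')
      have h4 := mul_nonneg hCk1_nonneg
        (mul_nonneg (Wnorm_nonneg qd (m - m')) (Wnorm_nonneg qd δm))
      linarith
    refine le_trans ?_ hmaj2
    rw [fderiv_Gfun_apply k hk, fderiv_Gfun_apply k hk, ← Finset.sum_sub_distrib]
    refine (Finset.abs_sum_le_sum_abs _ _).trans (Finset.sum_le_sum fun n _ => ?_)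
    have e : δm.1 n * k (x j) (m.2 n) + m.1 n * fderiv ℝ (k (x j)) (m.2 n) (δm.2 n)
        - (δm.1 n * k (x j) (m'.2 n) + m'.1 n * fderiv ℝ (k (x j)) (m'.2 n) (δm.2 n))
        = δm.1 n * (k (x j) (m.2 n) - k (x j) (m'.2 n))
          + (m - m').1 n * fderiv ℝ (k (x j)) (m.2 n) (δm.2 n)
          + m'.1 n * (fderiv ℝ (k (x j)) (m.2 n) - fderiv ℝ (k (x j)) (m'.2 n)) (δm.2 n) := by
      have : (m - m').1 n = m.1 n - m'.1 n := rfl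
      rw [this, _root_.sub_apply]
      ring
    rw [e]
    refine (abs_add_le _ _).trans
      (add_le_add ((abs_add_le _ _).trans (add_le_add ?_ ?_)) ?_)
    · rw [abs_mul]
      refine (mul_le_mul_of_nonneg_left (hLip j n) (abs_nonneg _)).trans_eq ?_
      ring
    · rw [abs_mul]
      have h1 : |fderiv ℝ (k (x j)) (m.2 n) (δm.2 n)| ≤ Ck' * ‖δm.2 n‖ :=
        ContinuousLinearMap.le_of_opNorm_le _ (hCk1 _ (hx j) _ (hKΩ n (hy n))) _
      refine (mul_le_mul_of_nonneg_left h1 (abs_nonneg _)).trans_eq ?_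
      ring
    · rw [abs_mul]
      have h1 : |(fderiv ℝ (k (x j)) (m.2 n) - fderiv ℝ (k (x j)) (m'.2 n)) (δm.2 n)|
          ≤ Ck'' * ‖(m - m').2 n‖ * ‖δm.2 n‖ :=
        ContinuousLinearMap.le_of_opNorm_le _ (hLip' j n) _
      refine (mul_le_mul (hq' n) h1 (abs_nonneg _) (by positivity)).trans_eq ?_
      ring
end
end

section
/- Let d ≥ 1, y₁, y₂ ∈ ℝ^d and q₁, q₂ > 0. Then the supremum of q₁ f(y₁) − q₂ f(y₂) over all functions f : ℝ^d → ℝ that are 1-Lipschitz and satisfy |f(x)| ≤ 1 for all x ∈ ℝ^d equals |q₁ − q₂| + min{q₁, q₂} · min{‖y₁ − y₂‖₂, 2}. -/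
/-!
With `D = min ‖y₁ - y₂‖ 2`, every admissible `f` satisfies `f y₁ - f y₂ ≤ D`. Splitting off the common
mass, `q₁ f(y₁) - q₂ f(y₂)` is `(q₁ - q₂) f(y₁) + q₂ (f(y₁) - f(y₂))` if `q₂ ≤ q₁`, and
`q₁ (f(y₁) - f(y₂)) - (q₂ - q₁) f(y₂)` otherwise, which gives the upper bound. It is attained by the
distance to the point carrying the larger mass, truncated at `2` and shifted by `-1` to lie in
`[-1, 1]`: up to sign, this makes both terms extremal at once.
-/

/-- The distance to `y`, truncated at `2` and shifted into `[-1, 1]`: the extremal test function. -/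
noncomputable def truncDist {E : Type*} [NormedAddCommGroup E] (y x : E) : ℝ :=
  min ‖x - y‖ 2 - 1

lemma lipschitzWith_truncDist {E : Type*} [NormedAddCommGroup E] (y : E) :
    LipschitzWith 1 (truncDist y) := by
  have h : LipschitzWith 1 fun x : E => min (dist x y) 2 :=
    (LipschitzWith.dist_left y).min_const 2
  refine LipschitzWith.of_dist_le_mul fun a b => ?_
  simpa [truncDist, dist_eq_norm] using h.dist_le_mul a b

lemma abs_truncDist_le {E : Type*} [NormedAddCommGroup E] (y x : E) : |truncDist y x| ≤ 1 := by
  have h₀ : 0 ≤ min ‖x - y‖ 2 := le_min (norm_nonneg _) zero_le_two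
  have h₂ : min ‖x - y‖ 2 ≤ 2 := min_le_right _ _
  rw [truncDist, abs_le]
  constructor <;> linarith


/-- **Kantorovich–Rubinstein distance between two point masses.** For `y₁, y₂ ∈ ℝ^d` and
`q₁, q₂ > 0`, the supremum of `q₁ f(y₁) − q₂ f(y₂)` over all `1`-Lipschitz functions
`f : ℝ^d → ℝ` with `|f| ≤ 1` equals `|q₁ − q₂| + min{q₁,q₂} · min{‖y₁ − y₂‖₂, 2}`. -/
theorem stmt_19 (d : ℕ) (hd : 1 ≤ d)
    (y₁ y₂ : EuclideanSpace ℝ (Fin d)) (q₁ q₂ : ℝ) (hq₁ : 0 < q₁) (hq₂ : 0 < q₂) :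
    IsLUB {r : ℝ | ∃ f : EuclideanSpace ℝ (Fin d) → ℝ,
        LipschitzWith 1 f ∧ (∀ x, |f x| ≤ 1) ∧ r = q₁ * f y₁ - q₂ * f y₂}
      (|q₁ - q₂| + min q₁ q₂ * min ‖y₁ - y₂‖ 2) := by
  constructor
  · rintro r ⟨f, hf, hb, rfl⟩
    have h₁ := abs_le.1 (hb y₁)
    have h₂ := abs_le.1 (hb y₂)
    have hD : f y₁ - f y₂ ≤ min ‖y₁ - y₂‖ 2 := by
      refine le_min ?_ (by linarith)
      have h := hf.dist_le_mul y₁ y₂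
      rw [Real.dist_eq, dist_eq_norm, NNReal.coe_one, one_mul] at h
      exact (le_abs_self _).trans h
    rcases le_total q₂ q₁ with h | h
    · rw [min_eq_right h, abs_of_nonneg (sub_nonneg.2 h)]
      nlinarith [mul_le_mul_of_nonneg_left hD hq₂.le,
        mul_le_mul_of_nonneg_left h₁.2 (sub_nonneg.2 h)]
    · rw [min_eq_left h, abs_of_nonpos (sub_nonpos.2 h)]
      nlinarith [mul_le_mul_of_nonneg_left hD hq₁.le,
        mul_le_mul_of_nonneg_left h₂.1 (sub_nonneg.2 h)]
  · intro b hb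
    apply hb
    rcases le_total q₂ q₁ with h | h
    · refine ⟨fun x => -truncDist y₁ x, (lipschitzWith_truncDist y₁).neg,
        fun x => by simpa using abs_truncDist_le y₁ x, ?_⟩
      rw [min_eq_right h, abs_of_nonneg (sub_nonneg.2 h)]
      simp only [truncDist, sub_self, norm_zero, min_eq_left zero_le_two, norm_sub_rev y₂ y₁]
      ring
    · refine ⟨truncDist y₂, lipschitzWith_truncDist y₂, abs_truncDist_le y₂, ?_⟩
      rw [min_eq_left h, abs_of_nonpos (sub_nonpos.2 h)]
      simp only [truncDist, sub_self, norm_zero, min_eq_left zero_le_two]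
      ring
end
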